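/- arXiv:2511.13085 — 2 statements merged into one kernel-verified Lean document; each statement's English description precedes it below -/
import Mathlib

section
/- Let U satisfy Assumptions 1 and 3, and let Γ = (γ_k)_{k≥1} be a non-increasing step sequence with γ₁ ≤ 1/(m+L), γ_n > 0, γ_n → 0 and Σ_n γ_n = ∞. Then the decreasing-step PRLMC started at any x ∈ ℝ^d satisfies lim_{n→∞} W₂( L(Y_{t_n}^x), π ) = 0. -/
open MeasureTheory ProbabilityTheory Filter
open scoped ENNReal NNReal RealInnerProductSpace Topology BigOperators

noncomputable section

/-- Euclidean space `ℝ^d`. -/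
abbrev Euc (d : ℕ) : Type := EuclideanSpace ℝ (Fin d)

/-- Assumption 1: `U` is `C¹`, `m`-strongly convex and `L`-gradient Lipschitz
(expressed through the two-sided quadratic bound), with `∇U(0) = 0`. -/
def StrongAssumption {d : ℕ} (U : Euc d → ℝ) (m L : ℝ) : Prop :=
  ContDiff ℝ 1 U ∧ 0 < m ∧ m ≤ L ∧
  (∀ x y : Euc d,
    m / 2 * ‖x - y‖ ^ 2 ≤ U y - U x - ⟪gradient U x, y - x⟫ ∧
    U y - U x - ⟪gradient U x, y - x⟫ ≤ L / 2 * ‖x - y‖ ^ 2) ∧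
  gradient U 0 = 0

/-- Assumption 3: `U` is `C³` with third derivative uniformly bounded by `Lt`. -/
def ThirdDerivBounded {d : ℕ} (U : Euc d → ℝ) (Lt : ℝ) : Prop :=
  ContDiff ℝ 3 U ∧ ∀ x : Euc d, ‖iteratedFDeriv ℝ 3 U x‖ ≤ Lt

/-- The standard Gaussian measure on `ℝ^d`. -/
def stdGaussian (d : ℕ) : Measure (Euc d) :=
  (Measure.pi fun _ : Fin d => ProbabilityTheory.gaussianReal 0 1).map
    ⇑(EuclideanSpace.equiv (Fin d) ℝ).symm

/-- Bernoulli(p) distribution on `ℝ`, giving mass `p` to `1` and `1-p` to `0`. -/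
def bern (p : ℝ≥0∞) : Measure ℝ :=
  p • Measure.dirac (1 : ℝ) + (1 - p) • Measure.dirac (0 : ℝ)

/-- The `i`-th PRLMC midpoint. -/
def prlmcMid {d : ℕ} (U : Euc d → ℝ) (η : ℝ) (K : ℕ) (x : Euc d)
    (g : Fin K → Euc d) (i : Fin K) : Euc d :=
  x - (((i : ℝ) * η / (K : ℝ)) • gradient U x) + Real.sqrt (2 * (i : ℝ) * η / (K : ℝ)) • g i

/-- One step of the PRLMC scheme with step size `η`, Bernoulli variables `h`,
midpoint Gaussians `g` and driving Gaussian `z`. -/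
def prlmcStep {d : ℕ} (U : Euc d → ℝ) (η : ℝ) (K : ℕ) (x : Euc d)
    (h : Fin K → ℝ) (g : Fin K → Euc d) (z : Euc d) : Euc d :=
  x - η • gradient U x
    + η • ∑ i : Fin K, h i • (gradient U x - gradient U (prlmcMid U η K x g i))
    + Real.sqrt (2 * η) • z

/-- The law of the randomness used at a single step of the PRLMC scheme:
`K` i.i.d. Bernoulli(1/K) variables, `K` i.i.d. standard Gaussians for the midpoints
and one standard Gaussian. -/
def prlmcNoise (d K : ℕ) : Measure ((Fin K → ℝ) × (Fin K → Euc d) × Euc d) :=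
  (Measure.pi fun _ : Fin K => bern (K : ℝ≥0∞)⁻¹).prod
    ((Measure.pi fun _ : Fin K => stdGaussian d).prod (stdGaussian d))

/-- The one-step transition kernel `Q_η` of the PRLMC chain. -/
def prlmcKernel {d : ℕ} (U : Euc d → ℝ) (η : ℝ) (K : ℕ) (x : Euc d) : Measure (Euc d) :=
  (prlmcNoise d K).map fun r => prlmcStep U η K x r.1 r.2.1 r.2.2

/-- The law of the PRLMC chain after `n` steps, started from the distribution `μ`. -/
def prlmcIter {d : ℕ} (U : Euc d → ℝ) (η : ℝ) (K : ℕ) (μ : Measure (Euc d)) :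
    ℕ → Measure (Euc d)
  | 0 => μ
  | n + 1 => (prlmcIter U η K μ n).bind (prlmcKernel U η K)

/-- The law of the decreasing-step PRLMC chain after `n` steps (the `(k+1)`-th step uses
step size `γ (k+1)`), started from the distribution `μ`. -/
def prlmcIterVar {d : ℕ} (U : Euc d → ℝ) (K : ℕ) (γ : ℕ → ℝ) (μ : Measure (Euc d)) :
    ℕ → Measure (Euc d)
  | 0 => μ
  | n + 1 => (prlmcIterVar U K γ μ n).bind (prlmcKernel U (γ (n + 1)) K)

/-- Total variation distance. -/
def dTV {d : ℕ} (μ ν : Measure (Euc d)) : ℝ≥0∞ :=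
  ⨆ (A : Set (Euc d)) (_ : MeasurableSet A), max (μ A - ν A) (ν A - μ A)

/-- 2-Wasserstein distance. -/
def W2 {d : ℕ} (μ ν : Measure (Euc d)) : ℝ≥0∞ :=
  ⨅ (π : Measure (Euc d × Euc d)) (_ : π.map Prod.fst = μ ∧ π.map Prod.snd = ν),
    (∫⁻ p, ((‖p.1 - p.2‖₊ : ℝ≥0∞)) ^ 2 ∂π) ^ (1 / 2 : ℝ)

/-- The Gibbs measure `π(dx) ∝ exp(-U(x)) dx`. -/
def gibbs {d : ℕ} (U : Euc d → ℝ) : Measure (Euc d) :=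
  (∫⁻ x, ENNReal.ofReal (Real.exp (-U x)) ∂(volume : Measure (Euc d)))⁻¹ •
    (volume : Measure (Euc d)).withDensity fun x => ENNReal.ofReal (Real.exp (-U x))

/-- Membership in the functional class `𝒢`: `C²` functions with bounded gradient and
bounded Hessian. -/
def MemG {d : ℕ} (h : Euc d → ℝ) : Prop :=
  ContDiff ℝ 2 h ∧ (∃ M, ∀ x, ‖gradient h x‖ ≤ M) ∧
    (∃ M, ∀ x, ‖iteratedFDeriv ℝ 2 h x‖ ≤ M)

/-- The distance `d_𝒢`. -/
def dG {d : ℕ} (μ ν : Measure (Euc d)) : ℝ :=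
  sSup { r : ℝ | ∃ h : Euc d → ℝ, MemG h ∧ r = (∫ x, h x ∂μ) - ∫ x, h x ∂ν }

/-- `B` is a standard `d`-dimensional Brownian motion on `(Ω, P)`. -/
def IsBrownianMotion {Ω : Type} [MeasurableSpace Ω] {d : ℕ} (P : Measure Ω)
    (B : ℝ → Ω → Euc d) : Prop :=
  (∀ t, Measurable (B t)) ∧
  (∀ᵐ ω ∂P, B 0 ω = 0 ∧ Continuous fun t => B t ω) ∧
  (∀ s t : ℝ, 0 ≤ s → s ≤ t →
    Measure.map (fun ω => B t ω - B s ω) P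
      = Measure.map (fun z => Real.sqrt (t - s) • z) (stdGaussian d)) ∧
  (∀ τ : ℕ → ℝ, Monotone τ → 0 ≤ τ 0 →
    iIndepFun (fun (i : ℕ) ω => B (τ (i + 1)) ω - B (τ i) ω) P)

/-- `X` is a solution of the Langevin SDE `dX_t = -∇U(X_t) dt + √2 dB_t` started at `x`. -/
def SolvesLangevin {Ω : Type} [MeasurableSpace Ω] {d : ℕ} (U : Euc d → ℝ) (P : Measure Ω)
    (B X : ℝ → Ω → Euc d) (x : Euc d) : Prop :=
  (∀ t, Measurable (X t)) ∧
  ∀ᵐ ω ∂P, (Continuous fun t => X t ω) ∧ ∀ t, 0 ≤ t →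
    X t ω = x - (∫ s in (0:ℝ)..t, gradient U (X s ω)) + Real.sqrt 2 • B t ω

/-- `κ = 2mL/(m+L)`. -/
def kap (m L : ℝ) : ℝ := 2 * m * L / (m + L)

/-- Cumulative times `t_n = γ_1 + ⋯ + γ_n`. -/
def tseq (γ : ℕ → ℝ) (n : ℕ) : ℝ := ∑ k ∈ Finset.Icc 1 n, γ k

section Analysis

variable {d : ℕ} {U : Euc d → ℝ} {m L Lt : ℝ}

lemma aux_grad_lip (hU : StrongAssumption U m L) (x y : Euc d) :
    ‖gradient U x - gradient U y‖ ≤ L * ‖x - y‖ := by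
  obtain ⟨_, hm, hmL, hq, _⟩ := hU
  have hL : 0 < L := lt_of_lt_of_le hm hmL
  set D := gradient U x - gradient U y with hD
  have h1 := (hq y (x - (1 / L) • D)).1
  have h2 := (hq x (x - (1 / L) • D)).2
  have h3 := (hq y x).2
  have e1 : x - (1 / L) • D - x = -((1 / L) • D) := by abel
  have e2 : x - (x - (1 / L) • D) = (1 / L) • D := by abel
  have e3 : x - (1 / L) • D - y = (x - y) - (1 / L) • D := by abel
  rw [e1, e2, inner_neg_right, inner_smul_right, norm_smul] at h2
  rw [e3, inner_sub_right, inner_smul_right] at h1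
  have e4 : ⟪gradient U x, D⟫ - ⟪gradient U y, D⟫ = ‖D‖ ^ 2 := by
    rw [← inner_sub_left, ← hD, real_inner_self_eq_norm_sq]
  have h0 : 0 ≤ m / 2 * ‖y - (x - (1 / L) • D)‖ ^ 2 := by positivity
  rw [norm_sub_rev y x] at h3
  have e5 : L / 2 * (‖(1 / L : ℝ)‖ * ‖D‖) ^ 2 = 1 / L * ‖D‖ ^ 2 / 2 := by
    rw [Real.norm_of_nonneg (by positivity)]; field_simp
  rw [e5] at h2
  have e6 : 1 / L * ⟪gradient U x, D⟫ - 1 / L * ⟪gradient U y, D⟫ = 1 / L * ‖D‖ ^ 2 := by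
    rw [← mul_sub, e4]
  have h5 : 1 / L * ‖D‖ ^ 2 ≤ L * ‖x - y‖ ^ 2 := by linarith
  have h6 : ‖D‖ ^ 2 ≤ (L * ‖x - y‖) ^ 2 := by
    have := mul_le_mul_of_nonneg_left h5 hL.le
    have e : L * (1 / L * ‖D‖ ^ 2) = ‖D‖ ^ 2 := by field_simp
    nlinarith
  exact (sq_le_sq₀ (norm_nonneg _) (by positivity)).1 h6

lemma aux_grad_norm (hU : StrongAssumption U m L) (x : Euc d) :
    ‖gradient U x‖ ≤ L * ‖x‖ := by
  have := aux_grad_lip hU x 0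
  rwa [hU.2.2.2.2, sub_zero, sub_zero] at this

lemma aux_grad_cont (hU : StrongAssumption U m L) : Continuous (gradient U) := by
  have : LipschitzWith (Real.toNNReal L) (gradient U) :=
    LipschitzWith.of_dist_le_mul fun x y => by
      rw [dist_eq_norm, dist_eq_norm,
        Real.coe_toNNReal L (hU.2.1.le.trans hU.2.2.1)]
      exact aux_grad_lip hU x y
  exact this.continuous

lemma aux_contr (hU : StrongAssumption U m L) {η : ℝ} (hη : 0 < η) (x y : Euc d) :
    ‖(x - η • gradient U x) - (y - η • gradient U y)‖ ^ 2
      ≤ (1 - 2 * m * η + L ^ 2 * η ^ 2) * ‖x - y‖ ^ 2 := by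
  have hl := aux_grad_lip hU x y
  obtain ⟨_, hm, hmL, hq, _⟩ := hU
  have h1 := (hq x y).1
  have h2 := (hq y x).1
  rw [norm_sub_rev y x] at h2
  have e : (x - η • gradient U x) - (y - η • gradient U y)
      = (x - y) - η • (gradient U x - gradient U y) := by rw [smul_sub]; abel
  have e2 : ⟪gradient U x, y - x⟫ = - ⟪gradient U x, x - y⟫ := by
    rw [← inner_neg_right, neg_sub]
  rw [e2] at h1
  have h3 : m * ‖x - y‖ ^ 2 ≤ ⟪x - y, gradient U x - gradient U y⟫ := by
    rw [real_inner_comm, inner_sub_left]; linarith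
  have h4 : ‖gradient U x - gradient U y‖ ^ 2 ≤ L ^ 2 * ‖x - y‖ ^ 2 := by
    rw [← mul_pow]; gcongr
  rw [e, norm_sub_sq_real, inner_smul_right, norm_smul, mul_pow, Real.norm_eq_abs, sq_abs]
  nlinarith [mul_le_mul_of_nonneg_left h3 hη.le, mul_le_mul_of_nonneg_left h4 (sq_nonneg η)]

lemma aux_trap1 {f : ℝ → ℝ} (hf : ContDiff ℝ 3 f) {M : ℝ}
    (hM : ∀ t, ‖iteratedDeriv 3 f t‖ ≤ M) :
    |f 1 - f 0 - (deriv f 0 + deriv f 1) / 2| ≤ M / 2 := by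
  have d0 : ∀ t, HasDerivAt f (deriv f t) t := fun t =>
    (hf.differentiable (by norm_num) t).hasDerivAt
  have hd : ∀ k : ℕ, k < 3 → ∀ t, HasDerivAt (iteratedDeriv k f) (iteratedDeriv (k+1) f t) t := by
    intro k hk t
    rw [iteratedDeriv_succ]
    exact (hf.differentiable_iteratedDeriv k (by exact_mod_cast hk) t).hasDerivAt
  have d1 : ∀ t, HasDerivAt (deriv f) (iteratedDeriv 2 f t) t := by
    intro t; have := hd 1 (by norm_num) t; rwa [iteratedDeriv_one] at this
  have d2 : ∀ t, HasDerivAt (iteratedDeriv 2 f) (iteratedDeriv 3 f t) t := hd 2 (by norm_num)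
  have hH : ∀ t ∈ Set.Icc (0:ℝ) 1, |deriv f t - deriv f 0 - t * iteratedDeriv 2 f t| ≤ M := by
    intro t ht
    have := (convex_Icc (0:ℝ) 1).norm_image_sub_le_of_norm_hasDerivWithin_le
      (f := fun t => deriv f t - deriv f 0 - t * iteratedDeriv 2 f t)
      (f' := fun t => -(t * iteratedDeriv 3 f t)) (C := M) (x := 0) (y := t)
      (fun s hs => by
        have := (((d1 s).sub_const (deriv f 0)).sub ((hasDerivAt_id s).mul (d2 s))).hasDerivWithinAt
          (s := Set.Icc (0:ℝ) 1)
        convert! this using 1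
        simp)
      (fun s hs => by
        rw [norm_neg, norm_mul, Real.norm_of_nonneg hs.1]
        nlinarith [hM s, hs.1, hs.2, norm_nonneg (iteratedDeriv 3 f s)])
      (by simp) ht
    simp only [sub_self, zero_mul, sub_zero, Real.norm_eq_abs] at this
    have hM0 : 0 ≤ M := (norm_nonneg _).trans (hM 0)
    rw [abs_of_nonneg ht.1] at this
    nlinarith [ht.2]
  have := norm_image_sub_le_of_norm_deriv_le_segment_01'
    (f := fun t => f t - f 0 - t * (deriv f 0 + deriv f t) / 2)
    (f' := fun t => (deriv f t - deriv f 0 - t * iteratedDeriv 2 f t) / 2) (C := M / 2)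
    (fun s hs => by
      have := (((d0 s).sub_const (f 0)).sub
        (((hasDerivAt_id s).mul ((d1 s).const_add (deriv f 0))).div_const 2)).hasDerivWithinAt
          (s := Set.Icc (0:ℝ) 1)
      convert! this using 1
      simp; ring)
    (fun s hs => by
      have := hH s ⟨hs.1, hs.2.le⟩
      rw [Real.norm_eq_abs, abs_div, abs_two]; linarith)
  simpa using this

lemma aux_trap (hU3 : ThirdDerivBounded U Lt) (x y : Euc d) :
    |U y - U x - (⟪gradient U x, y - x⟫ + ⟪gradient U y, y - x⟫) / 2|
      ≤ Lt * ‖y - x‖ ^ 3 / 2 := by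
  obtain ⟨hc, hb⟩ := hU3
  set v := y - x with hv
  let g : ℝ →L[ℝ] Euc d := ContinuousLinearMap.toSpanSingleton ℝ v
  have hgn : ‖g‖ = ‖v‖ := ContinuousLinearMap.norm_toSpanSingleton ..
  let F : Euc d → ℝ := fun z => U (x + z)
  have hF : ContDiff ℝ 3 F := hc.comp (contDiff_const.add contDiff_id)
  have hf : ContDiff ℝ 3 (F ∘ g) := hF.comp g.contDiff
  have hM : ∀ t, ‖iteratedDeriv 3 (F ∘ g) t‖ ≤ Lt * ‖v‖ ^ 3 := by
    intro t
    rw [← norm_iteratedFDeriv_eq_norm_iteratedDeriv, g.iteratedFDeriv_comp_right hF t le_rfl]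
    refine (ContinuousMultilinearMap.norm_compContinuousLinearMap_le _ _).trans ?_
    rw [iteratedFDeriv_comp_add_left]
    simp only [Finset.prod_const, Finset.card_univ, Fintype.card_fin, hgn]
    exact mul_le_mul_of_nonneg_right (hb _) (by positivity)
  have hd : ∀ t, deriv (F ∘ g) t = ⟪gradient U (x + t • v), v⟫ := by
    intro t
    have h1 : HasGradientAt U (gradient U (x + t • v)) (x + t • v) :=
      ((hc.differentiable (by norm_num)) _).hasGradientAt
    have h2 : HasDerivAt (fun t : ℝ => x + t • v) v t := by
      simpa using ((hasDerivAt_id t).smul_const v).const_add x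
    have := h1.hasFDerivAt.comp_hasDerivAt t h2
    have e : (U ∘ fun t : ℝ => x + t • v) = F ∘ g := by
      ext t; simp [F, g]
    rw [e] at this
    rw [this.deriv]
    simp
  have := aux_trap1 hf hM
  rw [hd, hd] at this
  simpa [F, g, hv] using this

end Analysis

section Measures

variable {d : ℕ} {U : Euc d → ℝ} {m L Lt : ℝ}

lemma aux_gauss_density (d : ℕ) : ∃ c : ℝ≥0∞, c ≠ ∞ ∧
    _root_.stdGaussian d = c • (volume : Measure (Euc d)).withDensity
      (fun z => ENNReal.ofReal (Real.exp (-(‖z‖ ^ 2 / 2)))) := by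
  let φ : ℝ → ℝ := gaussianPDFReal 0 1
  have hφ0 : ∀ x, 0 ≤ φ x := gaussianPDFReal_nonneg 0 1
  have hφi : Integrable φ := integrable_gaussianPDFReal 0 1
  have hφm : Measurable φ := measurable_gaussianPDFReal 0 1
  have hpi : (Measure.pi fun _ : Fin d => gaussianReal 0 1)
      = (volume : Measure (Fin d → ℝ)).withDensity (fun x => ENNReal.ofReal (∏ i, φ (x i))) := by
    apply Measure.pi_eq
    intro s hs
    rw [withDensity_apply _ (MeasurableSet.univ_pi hs),
      ← lintegral_indicator (MeasurableSet.univ_pi hs)]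
    have e1 : ∀ x : Fin d → ℝ, (Set.univ.pi s).indicator
        (fun x => ENNReal.ofReal (∏ i, φ (x i))) x
        = ENNReal.ofReal (∏ i, (s i).indicator φ (x i)) := by
      intro x
      by_cases hx : x ∈ Set.univ.pi s
      · rw [Set.indicator_of_mem hx]
        congr 1
        refine Finset.prod_congr rfl fun i _ => ?_
        rw [Set.indicator_of_mem (hx i trivial)]
      · rw [Set.indicator_of_notMem hx]
        simp only [Set.mem_pi, Set.mem_univ, true_implies, not_forall] at hx
        obtain ⟨i, hi⟩ := hx
        rw [Finset.prod_eq_zero (Finset.mem_univ i) (Set.indicator_of_notMem hi _)]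
        simp
    simp_rw [e1]
    have hi : ∀ i, Integrable ((s i).indicator φ) := fun i => hφi.indicator (hs i)
    have h0 : ∀ i x, 0 ≤ (s i).indicator φ x := fun i x =>
      Set.indicator_nonneg (fun x _ => hφ0 x) x
    rw [← ofReal_integral_eq_lintegral_ofReal]
    · rw [integral_fintype_prod_volume_eq_prod, ENNReal.ofReal_prod_of_nonneg]
      · refine Finset.prod_congr rfl fun i _ => ?_
        rw [gaussianReal_of_var_ne_zero 0 one_ne_zero, withDensity_apply _ (hs i),
          integral_indicator (hs i), ofReal_integral_eq_lintegral_ofReal hφi.integrableOn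
            (Eventually.of_forall hφ0)]
        rfl
      · intro i _
        exact integral_nonneg (h0 i)
    · exact Integrable.fintype_prod hi
    · exact Eventually.of_forall fun x => Finset.prod_nonneg fun i _ => h0 i _
  refine ⟨ENNReal.ofReal ((Real.sqrt (2 * Real.pi))⁻¹ ^ d), ENNReal.ofReal_ne_top, ?_⟩
  have hmp := PiLp.volume_preserving_toLp (Fin d)
  have hmeas : Measurable (fun z : Euc d => ENNReal.ofReal (Real.exp (-(‖z‖ ^ 2 / 2)))) := by
    fun_prop
  rw [_root_.stdGaussian, hpi]
  ext S hS
  have hme : Measurable (⇑(EuclideanSpace.equiv (Fin d) ℝ).symm) :=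
    (EuclideanSpace.equiv (Fin d) ℝ).symm.continuous.measurable
  rw [Measure.map_apply hme hS, withDensity_apply _ (hme hS), Measure.smul_apply,
    withDensity_apply _ hS, smul_eq_mul, ← lintegral_const_mul _ hmeas,
    ← hmp.setLIntegral_comp_preimage hS (by fun_prop)]
  refine setLIntegral_congr_fun (hme hS) fun x _ => ?_
  rw [← ENNReal.ofReal_mul (by positivity)]
  congr 1
  simp only [φ, gaussianPDFReal, Finset.prod_mul_distrib, Finset.prod_const, Finset.card_univ,
    Fintype.card_fin, ← Real.exp_sum, EuclideanSpace.norm_sq_eq]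
  simp [Finset.sum_div, neg_div]

instance aux_gauss_prob (d : ℕ) : IsProbabilityMeasure (_root_.stdGaussian d) :=
  Measure.isProbabilityMeasure_map
    (EuclideanSpace.equiv (Fin d) ℝ).symm.continuous.measurable.aemeasurable

lemma aux_exp_int {c : ℝ} (hc : 0 < c) :
    Integrable (fun z : Euc d => Real.exp (-(c * ‖z‖ ^ 2))) := by
  have := GaussianFourier.integrable_cexp_neg_mul_sq_norm_add (V := Euc d) (b := (c : ℂ))
    (by simpa using hc) 0 0
  have := this.norm
  refine this.congr (Eventually.of_forall fun z => ?_)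
  simp only [Complex.norm_exp]
  congr 1
  rw [zero_mul, add_zero, neg_mul, Complex.neg_re]
  norm_cast

/-- fifth-moment weight -/
def wt (z : Euc d) : ℝ≥0∞ := ENNReal.ofReal ((1 + ‖z‖) ^ 5)

lemma wt_meas : Measurable (wt : Euc d → ℝ≥0∞) := by unfold wt; fun_prop

lemma one_le_wt (z : Euc d) : 1 ≤ wt z := by
  rw [wt, ENNReal.one_le_ofReal]
  exact one_le_pow₀ (by linarith [norm_nonneg z])

lemma aux_moment {V : Euc d → ℝ} (hV : Measurable V) {c b : ℝ} (hc : 0 < c)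
    (h : ∀ z, b + c * ‖z‖ ^ 2 ≤ V z) :
    ∫⁻ z, wt z ∂((volume : Measure (Euc d)).withDensity
      (fun z => ENNReal.ofReal (Real.exp (-V z)))) < ∞ := by
  rw [lintegral_withDensity_eq_lintegral_mul _ (by fun_prop) wt_meas]
  obtain ⟨C, hC⟩ : ∃ C : ℝ, ∀ r : ℝ, 0 ≤ r → (1 + r) ^ 5 ≤ C * Real.exp (c / 2 * r ^ 2) := by
    refine ⟨Real.exp (5 ^ 2 / (2 * c)), fun r hr => ?_⟩
    have h1 : 1 + r ≤ Real.exp r := by linarith [Real.add_one_le_exp r]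
    calc (1 + r) ^ 5 ≤ Real.exp r ^ 5 := by gcongr
      _ = Real.exp (5 * r) := by rw [← Real.exp_nat_mul]; norm_num
      _ ≤ Real.exp (5 ^ 2 / (2 * c) + c / 2 * r ^ 2) := by
        apply Real.exp_le_exp.2
        have : 5 ^ 2 / (2 * c) + c / 2 * r ^ 2 - 5 * r = (5 - c * r) ^ 2 / (2 * c) := by
          field_simp; ring
        have : 0 ≤ (5 - c * r) ^ 2 / (2 * c) := by positivity
        linarith
      _ = _ := by rw [Real.exp_add]
  have hC0 : 0 ≤ C := by
    have := hC 0 le_rfl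
    norm_num at this; linarith
  refine lt_of_le_of_lt (lintegral_mono (g := fun z : Euc d => ENNReal.ofReal
    (Real.exp (-b) * C * Real.exp (-(c / 2 * ‖z‖ ^ 2)))) fun z => ?_) ?_
  · simp only [Pi.mul_apply, wt]
    rw [← ENNReal.ofReal_mul (Real.exp_nonneg _)]
    apply ENNReal.ofReal_le_ofReal
    calc Real.exp (-V z) * (1 + ‖z‖) ^ 5
        ≤ Real.exp (-(b + c * ‖z‖ ^ 2)) * (C * Real.exp (c / 2 * ‖z‖ ^ 2)) := by
          gcongr
          · exact h z
          · exact hC _ (norm_nonneg _)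
      _ = Real.exp (-b) * C * (Real.exp (-(c * ‖z‖ ^ 2)) * Real.exp (c / 2 * ‖z‖ ^ 2)) := by
          rw [neg_add, Real.exp_add]; ring
      _ = _ := by
          rw [← Real.exp_add]; congr 2; ring
  · exact ((aux_exp_int (half_pos hc)).const_mul _).lintegral_lt_top

lemma aux_gauss_moment (d : ℕ) : ∫⁻ z, wt z ∂(_root_.stdGaussian d) < ∞ := by
  obtain ⟨c, hc, h⟩ := aux_gauss_density d
  rw [h, lintegral_smul_measure]
  exact ENNReal.mul_lt_top hc.lt_top
    (aux_moment (b := 0) (c := 1 / 2) (by fun_prop) (by norm_num) fun z => by linarith)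

lemma aux_U_lower (hU : StrongAssumption U m L) (z : Euc d) :
    U 0 + m / 2 * ‖z‖ ^ 2 ≤ U z := by
  have := (hU.2.2.2.1 0 z).1
  rw [hU.2.2.2.2, inner_zero_left, zero_sub, norm_neg] at this
  linarith

lemma aux_Z_ne_zero (hU : StrongAssumption U m L) :
    ∫⁻ x, ENNReal.ofReal (Real.exp (-U x)) ∂(volume : Measure (Euc d)) ≠ 0 := by
  have hc := hU.1.continuous
  rw [Ne, lintegral_eq_zero_iff (by fun_prop)]
  intro h
  have h2 : ∀ᵐ x ∂(volume : Measure (Euc d)), False := by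
    filter_upwards [h] with x hx
    simp only [Pi.zero_apply, ENNReal.ofReal_eq_zero] at hx
    exact absurd (Real.exp_pos _) (not_lt.2 hx)
  have h3 := ae_iff.1 h2
  simp only [not_false_eq_true, Set.ofPred_true] at h3
  exact (NeZero.ne (volume : Measure (Euc d))) (Measure.measure_univ_eq_zero.1 h3)

lemma aux_gibbs_moment (hU : StrongAssumption U m L) : ∫⁻ z, wt z ∂(gibbs U) < ∞ := by
  rw [gibbs, lintegral_smul_measure]
  exact ENNReal.mul_lt_top (ENNReal.inv_ne_top.2 (aux_Z_ne_zero hU)).lt_top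
    (aux_moment (hU.1.continuous.measurable) (half_pos hU.2.1) (aux_U_lower hU))

lemma aux_gibbs_prob (hU : StrongAssumption U m L) : IsProbabilityMeasure (gibbs U) := by
  have hc := hU.1.continuous
  refine ⟨?_⟩
  rw [gibbs, Measure.smul_apply, withDensity_apply _ MeasurableSet.univ, Measure.restrict_univ,
    smul_eq_mul]
  refine ENNReal.inv_mul_cancel (aux_Z_ne_zero hU) (ne_of_lt ?_)
  have := aux_moment (hU.1.continuous.measurable) (half_pos hU.2.1) (aux_U_lower hU)
  rw [lintegral_withDensity_eq_lintegral_mul _ (by fun_prop) wt_meas] at this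
  refine lt_of_le_of_lt (lintegral_mono fun z => ?_) this
  simp only [Pi.mul_apply]
  exact le_mul_of_one_le_right zero_le (one_le_wt z)

end Measures

section Mala

variable {d : ℕ} {U : Euc d → ℝ} {m L Lt : ℝ}

/-- Euler proposal. -/
def eprop (U : Euc d → ℝ) (η : ℝ) (y z : Euc d) : Euc d :=
  y - η • gradient U y + Real.sqrt (2 * η) • z

/-- Log of the Metropolis ratio. -/
def lacc (U : Euc d → ℝ) (η : ℝ) (y w : Euc d) : ℝ :=
  U y - U w + (‖w - y + η • gradient U y‖ ^ 2 - ‖y - w + η • gradient U w‖ ^ 2) / (4 * η)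

/-- Metropolis-adjusted step. -/
def mala (U : Euc d → ℝ) (η : ℝ) (y z : Euc d) (u : ℝ) : Euc d :=
  if u ≤ Real.exp (lacc U η y (eprop U η y z)) then eprop U η y z else y

/-- Uniform law on `[0,1]`. -/
def unif : Measure ℝ := volume.restrict (Set.Icc 0 1)

instance unif_prob : IsProbabilityMeasure unif := ⟨by simp [unif]⟩

lemma unif_le {t : ℝ} (ht : 0 ≤ t) : unif {u | u ≤ t} = ENNReal.ofReal (min 1 t) := by
  have hm : MeasurableSet {u : ℝ | u ≤ t} := measurableSet_le measurable_id measurable_const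
  rw [unif, Measure.restrict_apply hm]
  have : {u | u ≤ t} ∩ Set.Icc (0:ℝ) 1 = Set.Icc 0 (min 1 t) := by
    ext u; simp only [Set.mem_inter_iff, Set.mem_ofPred_eq, Set.mem_Icc, le_min_iff]; tauto
  rw [this, Real.volume_Icc, sub_zero]

lemma unif_gt {t : ℝ} (ht : 0 ≤ t) : unif {u | ¬ u ≤ t} = ENNReal.ofReal (1 - min 1 t) := by
  have h := prob_compl_eq_one_sub (μ := unif) (s := {u | u ≤ t})
    (measurableSet_le measurable_id measurable_const)
  rw [unif_le ht] at h
  rw [ENNReal.ofReal_sub _ (by positivity), ENNReal.ofReal_one, ← h]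
  rfl

lemma unif_ite {t : ℝ} (ht : 0 ≤ t) (A B : ℝ≥0∞) :
    ∫⁻ u, (if u ≤ t then A else B) ∂unif
      = ENNReal.ofReal (min 1 t) * A + ENNReal.ofReal (1 - min 1 t) * B := by
  have hm : MeasurableSet {u : ℝ | u ≤ t} := measurableSet_le measurable_id measurable_const
  rw [← lintegral_add_compl _ hm]
  congr 1
  · rw [setLIntegral_congr_fun (f := fun u => if u ≤ t then A else B) (g := fun _ => A) hm
      (fun u hu => if_pos hu), setLIntegral_const,
      unif_le ht, mul_comm]
  · rw [setLIntegral_congr_fun (f := fun u => if u ≤ t then A else B) (g := fun _ => B) hm.compl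
      (fun u hu => if_neg hu),
      setLIntegral_const, mul_comm]
    congr 1
    exact unif_gt ht

lemma unif_rej (l : ℝ) (B : ℝ≥0∞) :
    ∫⁻ u, (if u ≤ Real.exp l then 0 else B) ∂unif ≤ ENNReal.ofReal |l| * B := by
  rw [unif_ite (Real.exp_nonneg _), mul_zero, zero_add]
  gcongr
  rw [sub_le_iff_le_add, ← sub_le_iff_le_add', le_min_iff]
  constructor
  · linarith [abs_nonneg l]
  · have := Real.add_one_le_exp l
    linarith [neg_abs_le l]

lemma unif_acc {t : ℝ} (ht : 0 ≤ t) (A B : ℝ≥0∞) :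
    ∫⁻ u, (if u ≤ t then A else B) ∂unif + ENNReal.ofReal (min 1 t) * B
      = ENNReal.ofReal (min 1 t) * A + B := by
  rw [unif_ite ht, add_assoc, ← add_mul, ← ENNReal.ofReal_add _ (by positivity)]
  · simp
  · linarith [min_le_left 1 t]

lemma eprop_meas (hU : StrongAssumption U m L) (η : ℝ) :
    Measurable (fun p : Euc d × Euc d => eprop U η p.1 p.2) := by
  have := aux_grad_cont hU
  unfold eprop
  exact Continuous.measurable (by fun_prop)

lemma lacc_meas (hU : StrongAssumption U m L) (η : ℝ) :
    Measurable (fun p : Euc d × Euc d => lacc U η p.1 p.2) := by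
  have := aux_grad_cont hU
  have := hU.1.continuous
  unfold lacc
  exact Continuous.measurable (by fun_prop)

lemma mala_meas (hU : StrongAssumption U m L) (η : ℝ) :
    Measurable (fun p : Euc d × Euc d × ℝ => mala U η p.1 p.2.1 p.2.2) := by
  have h1 : Measurable (fun p : Euc d × Euc d × ℝ => eprop U η p.1 p.2.1) :=
    (eprop_meas hU η).comp (by fun_prop : Measurable fun p : Euc d × Euc d × ℝ => (p.1, p.2.1))
  have h2 : Measurable (fun p : Euc d × Euc d × ℝ => lacc U η p.1 (eprop U η p.1 p.2.1)) :=
    (lacc_meas hU η).comp (measurable_fst.prodMk h1)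
  unfold mala
  exact Measurable.ite (measurableSet_le (by fun_prop) h2.exp) h1 measurable_fst

/-- Joint unnormalised density. -/
def pden (U : Euc d → ℝ) (η : ℝ) (y w : Euc d) : ℝ :=
  Real.exp (-U y - ‖w - y + η • gradient U y‖ ^ 2 / (4 * η))

lemma aux_affine {r : ℝ} (hr : r ≠ 0) : ∃ C : ℝ≥0∞, ∀ (b : Euc d) (H : Euc d → ℝ≥0∞),
    Measurable H → ∫⁻ z, H (b + r • z) = C * ∫⁻ w, H w := by
  refine ⟨ENNReal.ofReal |(r ^ Module.finrank ℝ (Euc d))⁻¹|, fun b H hH => ?_⟩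
  have h1 : ∫⁻ z, H (b + r • z) = ∫⁻ v, H (b + v) ∂(Measure.map (fun x => r • x)
      (volume : Measure (Euc d))) := by
    rw [lintegral_map (by fun_prop) (by fun_prop)]
  rw [h1, Measure.map_addHaar_smul _ hr, lintegral_smul_measure, lintegral_add_left_eq_self]
  rfl

lemma aux_joint (hU : StrongAssumption U m L) {η : ℝ} (hη : 0 < η) : ∃ C : ℝ≥0∞,
    ∀ F : Euc d × Euc d → ℝ≥0∞, Measurable F →
    ∫⁻ y, ∫⁻ z, F (y, eprop U η y z) ∂(_root_.stdGaussian d) ∂(gibbs U)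
      = C * ∫⁻ y, ∫⁻ w, ENNReal.ofReal (pden U η y w) * F (y, w) := by
  obtain ⟨c, hc, hg⟩ := aux_gauss_density d
  obtain ⟨C, hC⟩ := aux_affine (d := d) (r := Real.sqrt (2 * η)) (by positivity)
  have hgc := aux_grad_cont hU
  have hUc := hU.1.continuous
  refine ⟨(∫⁻ x, ENNReal.ofReal (Real.exp (-U x)) ∂(volume : Measure (Euc d)))⁻¹ * (c * C),
    fun F hF => ?_⟩
  have hprop := eprop_meas hU η
  have e1 : ∀ y, ∫⁻ z, F (y, eprop U η y z) ∂(_root_.stdGaussian d)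
      = c * C * ∫⁻ w, ENNReal.ofReal (Real.exp (- (‖w - y + η • gradient U y‖ ^ 2 / (4 * η))))
          * F (y, w) := by
    intro y
    have hFy : Measurable fun w => F (y, w) := hF.comp measurable_prodMk_left
    have hFz : Measurable fun z => F (y, eprop U η y z) :=
      hFy.comp (hprop.comp measurable_prodMk_left)
    rw [hg, lintegral_smul_measure, lintegral_withDensity_eq_lintegral_mul _ (by fun_prop)
      hFz, smul_eq_mul, mul_assoc]
    congr 1
    rw [← hC (y - η • gradient U y) _ (by fun_prop)]
    refine lintegral_congr fun z => ?_
    simp only [Pi.mul_apply]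
    unfold eprop
    congr 4
    have : y - η • gradient U y + Real.sqrt (2 * η) • z - y + η • gradient U y
      = Real.sqrt (2 * η) • z := by abel
    rw [this, norm_smul, mul_pow, Real.norm_eq_abs, sq_abs, Real.sq_sqrt (by positivity)]
    field_simp
    ring
  simp_rw [e1]
  have hm1 : Measurable fun y => ∫⁻ w, ENNReal.ofReal (Real.exp (- (‖w - y + η • gradient U y‖ ^ 2 / (4 * η))))
          * F (y, w) := by
    apply Measurable.lintegral_prod_right'
      (f := fun p : Euc d × Euc d => ENNReal.ofReal (Real.exp (- (‖p.2 - p.1 + η • gradient U p.1‖ ^ 2 / (4 * η))))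
          * F p)
    refine Measurable.mul ?_ hF
    exact Measurable.ennreal_ofReal (Continuous.measurable (by fun_prop))
  rw [lintegral_const_mul _ hm1, gibbs, lintegral_smul_measure,
    lintegral_withDensity_eq_lintegral_mul _ (by fun_prop) hm1, smul_eq_mul]
  rw [← mul_assoc, mul_comm (c * C)]
  congr 1
  refine lintegral_congr fun y => ?_
  simp only [Pi.mul_apply]
  have hFy : Measurable fun w => F (y, w) := hF.comp measurable_prodMk_left
  rw [← lintegral_const_mul _ (by fun_prop)]
  refine lintegral_congr fun w => ?_
  rw [← mul_assoc, ← ENNReal.ofReal_mul (Real.exp_nonneg _), ← Real.exp_add, pden,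
    sub_eq_add_neg (-U y)]

lemma aux_sym {η : ℝ} (y w : Euc d) :
    pden U η y w * min 1 (Real.exp (lacc U η y w)) = min (pden U η y w) (pden U η w y) := by
  have h0 : 0 ≤ pden U η y w := Real.exp_nonneg _
  rw [mul_min_of_nonneg _ _ h0, mul_one]
  congr 1
  rw [pden, ← Real.exp_add, pden, lacc]
  congr 1
  ring

lemma aux_balance (hU : StrongAssumption U m L) {η : ℝ} (hη : 0 < η)
    {f : Euc d → ℝ≥0∞} (hf : Measurable f) :
    ∫⁻ y, ∫⁻ z, ENNReal.ofReal (min 1 (Real.exp (lacc U η y (eprop U η y z)))) * f (eprop U η y z)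
      ∂(_root_.stdGaussian d) ∂(gibbs U)
    = ∫⁻ y, ∫⁻ z, ENNReal.ofReal (min 1 (Real.exp (lacc U η y (eprop U η y z)))) * f y
      ∂(_root_.stdGaussian d) ∂(gibbs U) := by
  obtain ⟨C, hC⟩ := aux_joint hU hη
  have hl := lacc_meas hU η
  have hgc := aux_grad_cont hU
  have hUc := hU.1.continuous
  have hpd : Continuous fun p : Euc d × Euc d => pden U η p.1 p.2 := by
    unfold pden; fun_prop
  rw [hC (fun p => ENNReal.ofReal (min 1 (Real.exp (lacc U η p.1 p.2))) * f p.2) (by fun_prop),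
    hC (fun p => ENNReal.ofReal (min 1 (Real.exp (lacc U η p.1 p.2))) * f p.1) (by fun_prop)]
  congr 1
  have h0 : ∀ y w, 0 ≤ pden U η y w := fun y w => Real.exp_nonneg _
  simp_rw [← mul_assoc, ← ENNReal.ofReal_mul (h0 _ _), aux_sym]
  rw [lintegral_lintegral_swap]
  · simp_rw [min_comm]
  · refine Measurable.aemeasurable ?_
    have h1 := hpd.measurable
    have h2 : Measurable fun p : Euc d × Euc d => pden U η p.2 p.1 := h1.comp measurable_swap
    exact ((h1.min h2).ennreal_ofReal).mul (hf.comp measurable_snd)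

lemma mala_inv (hU : StrongAssumption U m L) {η : ℝ} (hη : 0 < η) :
    ((gibbs U).prod ((_root_.stdGaussian d).prod unif)).map
      (fun p => mala U η p.1 p.2.1 p.2.2) = gibbs U := by
  have := aux_gibbs_prob hU
  have hmm := mala_meas hU η
  have hl := lacc_meas hU η
  have hp := eprop_meas hU η
  ext S hS
  let f : Euc d → ℝ≥0∞ := S.indicator 1
  have hf : Measurable f := measurable_one.indicator hS
  have hfm : Measurable (fun p : Euc d × Euc d × ℝ => f (mala U η p.1 p.2.1 p.2.2)) := hf.comp hmm
  rw [← lintegral_indicator_one hS, ← lintegral_indicator_one hS, lintegral_map hf hmm]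
  change ∫⁻ p : Euc d × Euc d × ℝ, f (mala U η p.1 p.2.1 p.2.2) ∂_ = ∫⁻ y, f y ∂_
  rw [lintegral_prod _ hfm.aemeasurable]
  have e1 : ∀ y, ∫⁻ q : Euc d × ℝ, f (mala U η y q.1 q.2) ∂((_root_.stdGaussian d).prod unif)
      = ∫⁻ z, ∫⁻ u, f (mala U η y z u) ∂unif ∂(_root_.stdGaussian d) := fun y =>
    lintegral_prod _ (hfm.comp measurable_prodMk_left).aemeasurable
  simp_rw [e1]
  have hα : Measurable (fun p : Euc d × Euc d =>
      ENNReal.ofReal (min 1 (Real.exp (lacc U η p.1 (eprop U η p.1 p.2))))) := by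
    have : Measurable (fun p : Euc d × Euc d => lacc U η p.1 (eprop U η p.1 p.2)) :=
      hl.comp (measurable_fst.prodMk hp)
    fun_prop
  have hu : Measurable (fun p : Euc d × Euc d => ∫⁻ u, f (mala U η p.1 p.2 u) ∂unif) := by
    apply Measurable.lintegral_prod_right'
      (f := fun p : (Euc d × Euc d) × ℝ => f (mala U η p.1.1 p.1.2 p.2))
    exact hfm.comp (by fun_prop : Measurable fun p : (Euc d × Euc d) × ℝ => (p.1.1, p.1.2, p.2))
  set I := ∫⁻ y, ∫⁻ z, ENNReal.ofReal (min 1 (Real.exp (lacc U η y (eprop U η y z)))) * f y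
      ∂(_root_.stdGaussian d) ∂(gibbs U) with hI
  have hIfin : I ≠ ∞ := by
    have : I ≤ ∫⁻ y, ∫⁻ z, 1 ∂(_root_.stdGaussian d) ∂(gibbs U) := by
      refine lintegral_mono fun y => lintegral_mono fun z => ?_
      refine mul_le_one' (ENNReal.ofReal_le_one.2 (min_le_left _ _)) ?_
      exact Set.indicator_le_self' (fun _ _ => zero_le_one) y |>.trans le_rfl
    refine ne_top_of_le_ne_top ?_ this
    simp
  have key : (∫⁻ y, ∫⁻ z, ∫⁻ u, f (mala U η y z u) ∂unif ∂(_root_.stdGaussian d) ∂(gibbs U)) + I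
      = I + ∫⁻ y, f y ∂(gibbs U) := by
    have s1 : ∫⁻ y, f y ∂(gibbs U) = ∫⁻ y, ∫⁻ z, f y ∂(_root_.stdGaussian d) ∂(gibbs U) := by
      simp
    have hf1 : Measurable fun p : Euc d × Euc d => f p.1 := hf.comp measurable_fst
    have hf2 : Measurable fun p : Euc d × Euc d => f (eprop U η p.1 p.2) := hf.comp hp
    have hαf : Measurable fun p : Euc d × Euc d =>
        ENNReal.ofReal (min 1 (Real.exp (lacc U η p.1 (eprop U η p.1 p.2))))
          * f (eprop U η p.1 p.2) := hα.mul hf2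
    have hαfy : ∀ y, Measurable fun z =>
        ENNReal.ofReal (min 1 (Real.exp (lacc U η y (eprop U η y z))))
          * f (eprop U η y z) := fun y => hαf.comp measurable_prodMk_left
    have huy : ∀ y, Measurable fun z => ∫⁻ u, f (mala U η y z u) ∂unif :=
      fun y => hu.comp measurable_prodMk_left
    rw [s1]
    conv_rhs => rw [hI, ← aux_balance hU hη hf]
    rw [hI, ← lintegral_add_left hu.lintegral_prod_right',
      ← lintegral_add_left hαf.lintegral_prod_right']
    refine lintegral_congr fun y => ?_
    rw [← lintegral_add_left (huy y), ← lintegral_add_left (hαfy y)]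
    refine lintegral_congr fun z => ?_
    have := unif_acc (Real.exp_nonneg (lacc U η y (eprop U η y z))) (f (eprop U η y z)) (f y)
    rw [← this]
    congr 1
    refine lintegral_congr fun u => ?_
    rw [mala]; split_ifs <;> rfl
  rw [add_comm] at key
  exact (ENNReal.add_right_inj hIfin).1 key

end Mala

section Bounds

variable {d K : ℕ} {U : Euc d → ℝ} {m L Lt : ℝ}

lemma lacc_bound (hU : StrongAssumption U m L) (hU3 : ThirdDerivBounded U Lt) {η : ℝ}
    (hη : 0 < η) (y w : Euc d) :
    |lacc U η y w| ≤ Lt * ‖w - y‖ ^ 3 / 2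
      + η / 4 * ((L * ‖w - y‖) * (L * (2 * ‖y‖ + ‖w - y‖))) := by
  have h1 := aux_trap hU3 y w
  have hL : 0 < L := hU.2.1.trans_le hU.2.2.1
  set v := w - y with hv
  have hyw : y - w = -v := by rw [hv]; abel
  have e : lacc U η y w = -(U w - U y - (⟪gradient U y, v⟫ + ⟪gradient U w, v⟫) / 2)
      + η / 4 * (‖gradient U y‖ ^ 2 - ‖gradient U w‖ ^ 2) := by
    rw [lacc, ← hv, hyw, norm_add_sq_real, norm_add_sq_real, inner_smul_right, inner_smul_right,
      norm_smul, norm_smul, inner_neg_left, norm_neg, mul_pow, mul_pow, Real.norm_eq_abs, sq_abs,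
      real_inner_comm v, real_inner_comm v]
    field_simp
    ring
  have h2 : |‖gradient U y‖ ^ 2 - ‖gradient U w‖ ^ 2|
      ≤ (L * ‖v‖) * (L * (2 * ‖y‖ + ‖v‖)) := by
    rw [sq_sub_sq, abs_mul, mul_comm]
    have a1 : |‖gradient U y‖ - ‖gradient U w‖| ≤ L * ‖v‖ := by
      refine (abs_norm_sub_norm_le _ _).trans ?_
      rw [hv, norm_sub_rev w y]; exact aux_grad_lip hU y w
    have a2 : ‖w‖ ≤ ‖y‖ + ‖v‖ := by
      have : w = y + v := by rw [hv]; abel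
      rw [this]; exact norm_add_le _ _
    have a3 : |‖gradient U y‖ + ‖gradient U w‖| ≤ L * (2 * ‖y‖ + ‖v‖) := by
      rw [abs_of_nonneg (by positivity)]
      have := aux_grad_norm hU y
      have := aux_grad_norm hU w
      nlinarith
    exact mul_le_mul a1 a3 (abs_nonneg _) (by positivity)
  rw [e]
  refine (abs_add_le _ _).trans (add_le_add ?_ ?_)
  · rwa [abs_neg]
  · rw [abs_mul, abs_of_pos (by positivity : 0 < η / 4)]
    gcongr

lemma rej_bound (hU : StrongAssumption U m L) (hU3 : ThirdDerivBounded U Lt) {S : ℝ}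
    (hS : 0 < S) : ∃ C : ℝ, 0 ≤ C ∧ ∀ s : ℝ, 0 < s → s ≤ S → ∀ y z : Euc d,
      |lacc U (s ^ 2) y (eprop U (s ^ 2) y z)| * ‖eprop U (s ^ 2) y z - y‖ ^ 2
        ≤ C * s ^ 5 * ((1 + ‖y‖) ^ 5 * (1 + ‖z‖) ^ 5) := by
  have hL : 0 < L := hU.2.1.trans_le hU.2.2.1
  have hLt : 0 ≤ Lt := (norm_nonneg _).trans (hU3.2 0)
  let A := S * L + 2
  have hA : 0 < A := by positivity
  let B := Lt * A ^ 3 / 2 + 1 / 4 * (L * A * (L * (2 + S * A)))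
  have hB : 0 ≤ B := by positivity
  refine ⟨B * A ^ 2, by positivity, fun s hs hsS y z => ?_⟩
  set T := (1 + ‖y‖) * (1 + ‖z‖) with hT
  have hT1 : 1 ≤ T := by nlinarith [norm_nonneg y, norm_nonneg z, mul_nonneg (norm_nonneg y) (norm_nonneg z)]
  have hyT : ‖y‖ ≤ T := by nlinarith [norm_nonneg y, norm_nonneg z, mul_nonneg (norm_nonneg y) (norm_nonneg z)]
  have hzT : ‖z‖ ≤ T := by nlinarith [norm_nonneg y, norm_nonneg z, mul_nonneg (norm_nonneg y) (norm_nonneg z)]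
  have hv : ‖eprop U (s ^ 2) y z - y‖ ≤ s * (A * T) := by
    have e : eprop U (s ^ 2) y z - y = -(s ^ 2 • gradient U y) + Real.sqrt (2 * s ^ 2) • z := by
      rw [eprop]; abel
    have hq : Real.sqrt (2 * s ^ 2) ≤ 2 * s := by
      apply Real.sqrt_le_iff.2; constructor <;> nlinarith
    rw [e]
    refine (norm_add_le _ _).trans ?_
    rw [norm_neg, norm_smul, norm_smul, Real.norm_of_nonneg (Real.sqrt_nonneg _),
      Real.norm_of_nonneg (by positivity)]
    calc s ^ 2 * ‖gradient U y‖ + Real.sqrt (2 * s ^ 2) * ‖z‖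
        ≤ s ^ 2 * (L * T) + 2 * s * T := by
          gcongr
          exact (aux_grad_norm hU y).trans (by gcongr)
      _ = s * ((s * L + 2) * T) := by ring
      _ ≤ s * (A * T) := by simp only [A]; gcongr
  have hl := lacc_bound hU hU3 (by positivity : 0 < s ^ 2) y (eprop U (s ^ 2) y z)
  set V := ‖eprop U (s ^ 2) y z - y‖ with hV
  have hl2 : |lacc U (s ^ 2) y (eprop U (s ^ 2) y z)| ≤ B * s ^ 3 * T ^ 3 := by
    refine hl.trans ?_
    calc Lt * V ^ 3 / 2 + s ^ 2 / 4 * (L * V * (L * (2 * ‖y‖ + V)))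
        ≤ Lt * (s * (A * T)) ^ 3 / 2
          + s ^ 2 / 4 * (L * (s * (A * T)) * (L * (2 * T + S * (A * T)))) := by
          gcongr
          exact hv.trans (by gcongr)
      _ = Lt * A ^ 3 / 2 * s ^ 3 * T ^ 3
          + 1 / 4 * (L * A * (L * (2 + S * A))) * s ^ 3 * T ^ 2 := by ring
      _ ≤ Lt * A ^ 3 / 2 * s ^ 3 * T ^ 3
          + 1 / 4 * (L * A * (L * (2 + S * A))) * s ^ 3 * T ^ 3 := by
          gcongr
          norm_num
      _ = _ := by ring
  calc _ ≤ (B * s ^ 3 * T ^ 3) * (s * (A * T)) ^ 2 := by gcongr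
    _ = B * A ^ 2 * s ^ 5 * T ^ 5 := by ring
    _ = _ := by rw [hT, mul_pow]

lemma sum_bound (hU : StrongAssumption U m L) {S : ℝ} (hS : 0 < S) (K : ℕ) :
    ∃ C : ℝ, 0 ≤ C ∧ ∀ s : ℝ, 0 < s → s ≤ S → ∀ (x : Euc d) (h : Fin K → ℝ) (g : Fin K → Euc d),
      (∀ i, |h i| ≤ 1) →
      ‖∑ i : Fin K, h i • (gradient U x - gradient U (prlmcMid U (s ^ 2) K x g i))‖ ^ 2
        ≤ C * s ^ 2 * (‖x‖ ^ 2 + ∑ i, ‖g i‖ ^ 2) := by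
  have hL : 0 < L := hU.2.1.trans_le hU.2.2.1
  let A := L * (S * L + 2)
  have hA : 0 < A := by positivity
  refine ⟨A ^ 2 * (2 * K * (K + 1)), by positivity, fun s hs hsS x h g hh => ?_⟩
  have hterm : ∀ i, ‖h i • (gradient U x - gradient U (prlmcMid U (s ^ 2) K x g i))‖
      ≤ s * A * (‖x‖ + ‖g i‖) := by
    intro i
    have hi : ((i : ℕ) : ℝ) ≤ K := by exact_mod_cast i.2.le
    have hK : (0 : ℝ) < K := by exact_mod_cast (Nat.zero_le _).trans_lt i.2
    have hi0 : (0 : ℝ) ≤ ((i : ℕ) : ℝ) := Nat.cast_nonneg _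
    have c1 : (i : ℝ) * s ^ 2 / K ≤ s ^ 2 := by
      rw [div_le_iff₀ hK]; nlinarith [sq_nonneg s]
    have c10 : 0 ≤ (i : ℝ) * s ^ 2 / K := by positivity
    have c2 : Real.sqrt (2 * (i : ℝ) * s ^ 2 / K) ≤ 2 * s := by
      apply Real.sqrt_le_iff.2
      refine ⟨by positivity, ?_⟩
      have : 2 * (i : ℝ) * s ^ 2 / K = 2 * ((i : ℝ) * s ^ 2 / K) := by ring
      rw [this]; nlinarith
    have e : x - prlmcMid U (s ^ 2) K x g i = ((i : ℝ) * s ^ 2 / K) • gradient U x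
        - Real.sqrt (2 * (i : ℝ) * s ^ 2 / K) • g i := by
      rw [prlmcMid]; abel
    rw [norm_smul, Real.norm_eq_abs]
    calc |h i| * ‖gradient U x - gradient U (prlmcMid U (s ^ 2) K x g i)‖
        ≤ 1 * (L * ‖x - prlmcMid U (s ^ 2) K x g i‖) := by
          gcongr
          · exact hh i
          · exact aux_grad_lip hU _ _
      _ = L * ‖x - prlmcMid U (s ^ 2) K x g i‖ := one_mul _
      _ ≤ L * (s ^ 2 * (L * ‖x‖) + 2 * s * ‖g i‖) := by
          gcongr
          rw [e]
          refine (norm_sub_le _ _).trans ?_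
          rw [norm_smul, norm_smul, Real.norm_of_nonneg c10,
            Real.norm_of_nonneg (Real.sqrt_nonneg _)]
          gcongr
          exact aux_grad_norm hU x
      _ ≤ L * (s * S * (L * ‖x‖) + 2 * s * ‖g i‖) := by
          have : s ^ 2 ≤ s * S := by nlinarith
          gcongr
      _ ≤ L * (s * S * (L * ‖x‖) + 2 * s * ‖g i‖)
          + L * (s * S * (L * ‖g i‖) + 2 * s * ‖x‖) := le_add_of_nonneg_right (by positivity)
      _ = s * A * (‖x‖ + ‖g i‖) := by simp only [A]; ring
  have h1 : ‖∑ i : Fin K, h i • (gradient U x - gradient U (prlmcMid U (s ^ 2) K x g i))‖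
      ≤ s * A * ∑ i, (‖x‖ + ‖g i‖) := by
    rw [Finset.mul_sum]
    exact norm_sum_le_of_le _ fun i _ => hterm i
  have h2 : (∑ i : Fin K, (‖x‖ + ‖g i‖)) ^ 2 ≤ K * ∑ i : Fin K, (‖x‖ + ‖g i‖) ^ 2 := by
    have := sq_sum_le_card_mul_sum_sq (s := (Finset.univ : Finset (Fin K)))
      (f := fun i => ‖x‖ + ‖g i‖)
    simpa using this
  have h3 : ∑ i : Fin K, (‖x‖ + ‖g i‖) ^ 2 ≤ 2 * (K * ‖x‖ ^ 2 + ∑ i, ‖g i‖ ^ 2) := by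
    calc _ ≤ ∑ i : Fin K, 2 * (‖x‖ ^ 2 + ‖g i‖ ^ 2) :=
          Finset.sum_le_sum fun i _ => add_sq_le
      _ = _ := by
          rw [← Finset.mul_sum, Finset.sum_add_distrib]; simp
  have h4 : 2 * (K * ‖x‖ ^ 2 + ∑ i, ‖g i‖ ^ 2)
      ≤ 2 * ((K + 1 : ℝ) * (‖x‖ ^ 2 + ∑ i, ‖g i‖ ^ 2)) := by
    have : 0 ≤ ∑ i, ‖g i‖ ^ 2 := by positivity
    have hK : (0:ℝ) ≤ K := Nat.cast_nonneg _
    nlinarith [sq_nonneg ‖x‖, mul_nonneg hK this]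
  calc _ ≤ (s * A * ∑ i, (‖x‖ + ‖g i‖)) ^ 2 := by gcongr
    _ = s ^ 2 * A ^ 2 * (∑ i, (‖x‖ + ‖g i‖)) ^ 2 := by ring
    _ ≤ s ^ 2 * A ^ 2 * (K * (2 * ((K + 1 : ℝ) * (‖x‖ ^ 2 + ∑ i, ‖g i‖ ^ 2)))) := by
        gcongr
        exact h2.trans (by gcongr; exact h3.trans h4)
    _ = _ := by ring

lemma young3 {t : ℝ} (ht : 0 < t) (a b c : Euc d) :
    ‖a + b + c‖ ^ 2 ≤ (1 + t) * ‖a‖ ^ 2 + (1 + 1 / t) * (2 * (‖b‖ ^ 2 + ‖c‖ ^ 2)) := by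
  have h1 : ‖a + b + c‖ ≤ ‖a‖ + (‖b‖ + ‖c‖) := by
    rw [add_assoc]; exact (norm_add_le _ _).trans (by gcongr; exact norm_add_le _ _)
  set p := ‖a‖
  set q := ‖b‖ + ‖c‖ with hq
  have h2 : ‖a + b + c‖ ^ 2 ≤ (p + q) ^ 2 := by gcongr
  have h3 : (p + q) ^ 2 ≤ (1 + t) * p ^ 2 + (1 + 1 / t) * q ^ 2 := by
    have e : (1 + t) * p ^ 2 + (1 + 1 / t) * q ^ 2 - (p + q) ^ 2 = (t * p - q) ^ 2 / t := by
      field_simp; ring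
    have : 0 ≤ (t * p - q) ^ 2 / t := by positivity
    linarith
  have h4 : q ^ 2 ≤ 2 * (‖b‖ ^ 2 + ‖c‖ ^ 2) := add_sq_le
  have : (1 + 1 / t) * q ^ 2 ≤ (1 + 1 / t) * (2 * (‖b‖ ^ 2 + ‖c‖ ^ 2)) := by gcongr
  linarith

lemma step_bound (hU : StrongAssumption U m L) {S : ℝ} (hS : 0 < S) (K : ℕ) :
    ∃ C : ℝ, 0 ≤ C ∧ ∀ s : ℝ, 0 < s → s ≤ S → ∀ (x y : Euc d) (h : Fin K → ℝ)
      (g : Fin K → Euc d) (z : Euc d) (u : ℝ), (∀ i, |h i| ≤ 1) →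
      ‖prlmcStep U (s ^ 2) K x h g z - mala U (s ^ 2) y z u‖ ^ 2
        ≤ (1 - m * s ^ 2 + C * s ^ 4) * ‖x - y‖ ^ 2
          + C * s ^ 4 * ((1 + ‖y‖) ^ 5 + ∑ i, (1 + ‖g i‖) ^ 5)
          + (if u ≤ Real.exp (lacc U (s ^ 2) y (eprop U (s ^ 2) y z)) then 0
              else C / s ^ 2 * ‖eprop U (s ^ 2) y z - y‖ ^ 2) := by
  have hm : 0 < m := hU.2.1
  have hmL := hU.2.2.1
  have hL : 0 < L := hm.trans_le hmL
  obtain ⟨C1, hC1, hsum⟩ := sum_bound (d := d) hU hS K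
  let Q := 2 * S ^ 2 + 4 / m
  have hQ : 0 < Q := by positivity
  let C2 := L ^ 2 + m * L ^ 2 * S ^ 2 / 2
  refine ⟨C2 + Q + 2 * Q * C1, by positivity, fun s hs hsS x y h g z u hh => ?_⟩
  have hη : 0 < s ^ 2 := by positivity
  have hsS2 : s ^ 2 ≤ S ^ 2 := by gcongr
  set c : Euc d := if u ≤ Real.exp (lacc U (s ^ 2) y (eprop U (s ^ 2) y z)) then 0
              else eprop U (s ^ 2) y z - y with hc
  set a := (x - s ^ 2 • gradient U x) - (y - s ^ 2 • gradient U y) with ha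
  set R := ∑ i : Fin K, h i • (gradient U x - gradient U (prlmcMid U (s ^ 2) K x g i)) with hR
  have e : prlmcStep U (s ^ 2) K x h g z - mala U (s ^ 2) y z u = a + s ^ 2 • R + c := by
    rw [prlmcStep, mala, hc, ← hR, ha]
    split_ifs
    · rw [eprop]; abel
    · rw [eprop]; abel
  have hY := young3 (by positivity : 0 < m * s ^ 2 / 2) a (s ^ 2 • R) c
  have hcon := aux_contr hU hη x y
  have hRb := hsum s hs hsS x h g hh
  rw [norm_smul, mul_pow, Real.norm_of_nonneg hη.le] at hY
  have hQ1 : (1 + 1 / (m * s ^ 2 / 2)) * 2 ≤ Q / s ^ 2 := by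
    rw [le_div_iff₀ hη]
    have : (1 + 1 / (m * s ^ 2 / 2)) * 2 * s ^ 2 = 2 * s ^ 2 + 4 / m := by
      field_simp; ring
    rw [this]; simp only [Q]; linarith
  have hx : ‖x‖ ^ 2 ≤ 2 * (‖x - y‖ ^ 2 + ‖y‖ ^ 2) := by
    have : ‖x‖ ≤ ‖x - y‖ + ‖y‖ := by simpa using norm_add_le (x - y) y
    calc ‖x‖ ^ 2 ≤ (‖x - y‖ + ‖y‖) ^ 2 := by gcongr
      _ ≤ _ := add_sq_le
  have hp : ∀ v : Euc d, ‖v‖ ^ 2 ≤ (1 + ‖v‖) ^ 5 := fun v => by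
    have h0 := norm_nonneg v
    calc ‖v‖ ^ 2 ≤ (1 + ‖v‖) ^ 2 := by gcongr; linarith
      _ ≤ (1 + ‖v‖) ^ 5 := pow_le_pow_right₀ (by linarith) (by norm_num)
  have hg : ∑ i, ‖g i‖ ^ 2 ≤ ∑ i, (1 + ‖g i‖) ^ 5 := Finset.sum_le_sum fun i _ => hp _
  have hg0 : 0 ≤ ∑ i, (1 + ‖g i‖) ^ 5 := Finset.sum_nonneg fun i _ => by positivity
  have hy5 := hp y
  set G := ∑ i, (1 + ‖g i‖) ^ 5
  set Y5 := (1 + ‖y‖) ^ 5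
  have t1 : (1 + m * s ^ 2 / 2) * ‖a‖ ^ 2 ≤ (1 - m * s ^ 2 + C2 * s ^ 4) * ‖x - y‖ ^ 2 := by
    calc (1 + m * s ^ 2 / 2) * ‖a‖ ^ 2
        ≤ (1 + m * s ^ 2 / 2) * ((1 - 2 * m * s ^ 2 + L ^ 2 * (s ^ 2) ^ 2) * ‖x - y‖ ^ 2) := by
          gcongr
      _ = ((1 + m * s ^ 2 / 2) * (1 - 2 * m * s ^ 2 + L ^ 2 * (s ^ 2) ^ 2)) * ‖x - y‖ ^ 2 := by
          ring
      _ ≤ _ := by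
          gcongr
          have e1 : (1 + m * s ^ 2 / 2) * (1 - 2 * m * s ^ 2 + L ^ 2 * (s ^ 2) ^ 2)
            = 1 - m * s ^ 2 - m * s ^ 2 / 2 - m ^ 2 * s ^ 4 + L ^ 2 * s ^ 4
              + (m * L ^ 2 / 2 * s ^ 4) * s ^ 2 := by ring
          have e2 : (m * L ^ 2 / 2 * s ^ 4) * s ^ 2 ≤ (m * L ^ 2 / 2 * s ^ 4) * S ^ 2 := by gcongr
          have e3 : 0 ≤ m * s ^ 2 / 2 := by positivity
          have e4 : 0 ≤ m ^ 2 * s ^ 4 := by positivity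
          rw [e1]; simp only [C2]; nlinarith
  have t2 : (1 + 1 / (m * s ^ 2 / 2)) * (2 * ((s ^ 2) ^ 2 * ‖R‖ ^ 2 + ‖c‖ ^ 2))
      ≤ 2 * Q * C1 * s ^ 4 * (‖x - y‖ ^ 2 + Y5 + G) + Q / s ^ 2 * ‖c‖ ^ 2 := by
    calc (1 + 1 / (m * s ^ 2 / 2)) * (2 * ((s ^ 2) ^ 2 * ‖R‖ ^ 2 + ‖c‖ ^ 2))
        = ((1 + 1 / (m * s ^ 2 / 2)) * 2) * ((s ^ 2) ^ 2 * ‖R‖ ^ 2 + ‖c‖ ^ 2) := by ring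
      _ ≤ Q / s ^ 2 * ((s ^ 2) ^ 2 * (C1 * s ^ 2 * (2 * (‖x - y‖ ^ 2 + Y5 + G))) + ‖c‖ ^ 2) := by
          gcongr
          refine hRb.trans ?_
          gcongr
          linarith
      _ = _ := by field_simp
  have t3 : Q / s ^ 2 * ‖c‖ ^ 2 ≤ (if u ≤ Real.exp (lacc U (s ^ 2) y (eprop U (s ^ 2) y z)) then 0
              else (C2 + Q + 2 * Q * C1) / s ^ 2 * ‖eprop U (s ^ 2) y z - y‖ ^ 2) := by
    rw [hc]
    split_ifs
    · simp
    · gcongr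
      have : 0 ≤ C2 := by positivity
      have : 0 ≤ 2 * Q * C1 := by positivity
      linarith
  rw [e]
  refine hY.trans ((add_le_add t1 (t2.trans (add_le_add_right t3 _))).trans ?_)
  have hC20 : 0 ≤ C2 := by positivity
  have r1 : 0 ≤ Q * s ^ 4 * ‖x - y‖ ^ 2 := by positivity
  have r2 : 0 ≤ (C2 + Q) * s ^ 4 * (Y5 + G) := by positivity
  linarith

end Bounds

section Coupling

variable {d K : ℕ} {U : Euc d → ℝ} {m L Lt : ℝ}

lemma bern_prob (hK : 1 ≤ K) : IsProbabilityMeasure (bern (K : ℝ≥0∞)⁻¹) := by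
  refine ⟨?_⟩
  have h : (K : ℝ≥0∞)⁻¹ ≤ 1 := by
    rw [ENNReal.inv_le_one]; exact_mod_cast hK
  simp [bern, add_tsub_cancel_of_le h]

lemma bern_ae (p : ℝ≥0∞) : ∀ᵐ h ∂(bern p), |h| ≤ 1 := by
  rw [bern, ae_add_measure_iff]
  constructor
  · refine Measure.ae_smul_measure ?_ _
    rw [ae_dirac_iff (measurableSet_le (by fun_prop) (by fun_prop))]; simp
  · refine Measure.ae_smul_measure ?_ _
    rw [ae_dirac_iff (measurableSet_le (by fun_prop) (by fun_prop))]; simp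

lemma noise_prob (hK : 1 ≤ K) : IsProbabilityMeasure (prlmcNoise d K) := by
  have := bern_prob hK
  unfold prlmcNoise; infer_instance

lemma noise_ae (hK : 1 ≤ K) : ∀ᵐ r ∂(prlmcNoise d K), ∀ i, |r.1 i| ≤ 1 := by
  have := bern_prob hK
  rw [ae_all_iff]
  intro i
  have h1 : MeasurePreserving (fun r : (Fin K → ℝ) × (Fin K → Euc d) × Euc d => r.1)
      (prlmcNoise d K) (Measure.pi fun _ : Fin K => bern (K : ℝ≥0∞)⁻¹) := measurePreserving_fst
  have h2 := measurePreserving_eval (fun _ : Fin K => bern (K : ℝ≥0∞)⁻¹) i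
  exact (h2.comp h1).quasiMeasurePreserving.ae (bern_ae _)

lemma noise_g (hK : 1 ≤ K) (i : Fin K) : MeasurePreserving
    (fun r : (Fin K → ℝ) × (Fin K → Euc d) × Euc d => r.2.1 i)
      (prlmcNoise d K) (_root_.stdGaussian d) := by
  have := bern_prob hK
  have h1 : MeasurePreserving (fun r : (Fin K → ℝ) × (Fin K → Euc d) × Euc d => r.2)
      (prlmcNoise d K) _ := measurePreserving_snd
  have h2 := measurePreserving_eval (fun _ : Fin K => _root_.stdGaussian d) i
  exact (h2.comp measurePreserving_fst).comp h1

lemma noise_z (hK : 1 ≤ K) : MeasurePreserving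
    (fun r : (Fin K → ℝ) × (Fin K → Euc d) × Euc d => r.2.2)
      (prlmcNoise d K) (_root_.stdGaussian d) := by
  have := bern_prob hK
  have h1 : MeasurePreserving (fun r : (Fin K → ℝ) × (Fin K → Euc d) × Euc d => r.2)
      (prlmcNoise d K) _ := measurePreserving_snd
  exact measurePreserving_snd.comp h1

lemma step_meas (hU : StrongAssumption U m L) (η : ℝ) (K : ℕ) :
    Measurable (fun q : Euc d × ((Fin K → ℝ) × (Fin K → Euc d) × Euc d) =>
      prlmcStep U η K q.1 q.2.1 q.2.2.1 q.2.2.2) := by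
  have := aux_grad_cont hU
  unfold prlmcStep prlmcMid
  exact Continuous.measurable (by fun_prop)

/-- The joint one-step map. -/
def cmap (U : Euc d → ℝ) (η : ℝ) (K : ℕ)
    (q : (Euc d × Euc d) × ((Fin K → ℝ) × (Fin K → Euc d) × Euc d) × ℝ) : Euc d × Euc d :=
  (prlmcStep U η K q.1.1 q.2.1.1 q.2.1.2.1 q.2.1.2.2, mala U η q.1.2 q.2.1.2.2 q.2.2)

/-- One step of the coupling. -/
def cnext (U : Euc d → ℝ) (η : ℝ) (K : ℕ) (ρ : Measure (Euc d × Euc d)) :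
    Measure (Euc d × Euc d) :=
  (ρ.prod ((prlmcNoise d K).prod unif)).map (cmap U η K)

lemma cmap_fst_meas (hU : StrongAssumption U m L) (η : ℝ) (K : ℕ) : Measurable
    (fun q : (Euc d × Euc d) × ((Fin K → ℝ) × (Fin K → Euc d) × Euc d) × ℝ =>
      prlmcStep U η K q.1.1 q.2.1.1 q.2.1.2.1 q.2.1.2.2) := by
  have := aux_grad_cont hU
  unfold prlmcStep prlmcMid
  exact Continuous.measurable (by fun_prop)

lemma cmap_snd_meas (hU : StrongAssumption U m L) (η : ℝ) (K : ℕ) : Measurable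
    (fun q : (Euc d × Euc d) × ((Fin K → ℝ) × (Fin K → Euc d) × Euc d) × ℝ =>
      mala U η q.1.2 q.2.1.2.2 q.2.2) :=
  (mala_meas hU η).comp (by fun_prop : Measurable
    fun q : (Euc d × Euc d) × ((Fin K → ℝ) × (Fin K → Euc d) × Euc d) × ℝ =>
      (q.1.2, q.2.1.2.2, q.2.2))

lemma cmap_meas (hU : StrongAssumption U m L) (η : ℝ) (K : ℕ) :
    Measurable (cmap (d := d) U η K) :=
  (cmap_fst_meas hU η K).prodMk (cmap_snd_meas hU η K)

lemma cnext_prob (hU : StrongAssumption U m L) (hK : 1 ≤ K) (η : ℝ)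
    (ρ : Measure (Euc d × Euc d)) [IsProbabilityMeasure ρ] :
    IsProbabilityMeasure (cnext U η K ρ) := by
  have := noise_prob (d := d) hK
  exact Measure.isProbabilityMeasure_map (cmap_meas hU η K).aemeasurable

set_option maxHeartbeats 2000000 in
lemma cnext_fst (hU : StrongAssumption U m L) (hK : 1 ≤ K) (η : ℝ)
    (ρ : Measure (Euc d × Euc d)) [IsProbabilityMeasure ρ] :
    (cnext U η K ρ).map Prod.fst = (ρ.map Prod.fst).bind (prlmcKernel U η K) := by
  have := noise_prob (d := d) hK
  have hs := step_meas hU η K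
  have hsx : ∀ x, Measurable fun r : (Fin K → ℝ) × (Fin K → Euc d) × Euc d =>
      prlmcStep U η K x r.1 r.2.1 r.2.2 := fun x => hs.comp measurable_prodMk_left
  have hk : Measurable (prlmcKernel U η K) := by
    refine Measure.measurable_of_measurable_coe _ fun S hS => ?_
    have : ∀ x, prlmcKernel U η K x S = prlmcNoise d K (Prod.mk x ⁻¹'
        ((fun q : Euc d × ((Fin K → ℝ) × (Fin K → Euc d) × Euc d) =>
          prlmcStep U η K q.1 q.2.1 q.2.2.1 q.2.2.2) ⁻¹' S)) := fun x => by
      rw [prlmcKernel, Measure.map_apply (hsx x) hS]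
      rfl
    simp_rw [this]
    exact measurable_measure_prodMk_left (hs hS)
  have e1 : (cnext U η K ρ).map Prod.fst = ((ρ.map Prod.fst).prod (prlmcNoise d K)).map
      (fun q => prlmcStep U η K q.1 q.2.1 q.2.2.1 q.2.2.2) := by
    have h1 : ((prlmcNoise d K).prod unif).map Prod.fst = prlmcNoise d K := by
      simp
    conv_rhs => rw [← h1]
    rw [Measure.map_prod_map _ _ measurable_fst measurable_fst, Measure.map_map hs (by fun_prop),
      cnext, Measure.map_map measurable_fst (cmap_meas hU η K)]
    rfl
  rw [e1]
  ext S hS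
  have : IsProbabilityMeasure (ρ.map Prod.fst) :=
    Measure.isProbabilityMeasure_map measurable_fst.aemeasurable
  rw [Measure.map_apply hs hS, Measure.prod_apply (hs hS), Measure.bind_apply hS hk.aemeasurable]
  refine lintegral_congr fun x => ?_
  rw [prlmcKernel, Measure.map_apply (hsx x) hS]
  rfl

lemma cnext_snd (hU : StrongAssumption U m L) (hK : 1 ≤ K) {η : ℝ} (hη : 0 < η)
    (ρ : Measure (Euc d × Euc d)) [IsProbabilityMeasure ρ] (hρ : ρ.map Prod.snd = gibbs U) :
    (cnext U η K ρ).map Prod.snd = gibbs U := by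
  have := noise_prob (d := d) hK
  have h1 := (noise_z (d := d) hK).map_eq
  have h2 : unif.map id = unif := Measure.map_id
  have hz : Measurable (fun r : (Fin K → ℝ) × (Fin K → Euc d) × Euc d => r.2.2) := by fun_prop
  conv_rhs => rw [← mala_inv hU hη]
  rw [← hρ]
  conv_rhs => rw [← h1, ← h2]
  rw [Measure.map_prod_map _ _ hz measurable_id,
    Measure.map_prod_map _ _ measurable_snd (by fun_prop),
    Measure.map_map (mala_meas hU η) (by fun_prop),
    cnext, Measure.map_map measurable_snd (cmap_meas hU η K)]
  rfl

/-- Squared transport cost of a coupling. -/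
def en (ρ : Measure (Euc d × Euc d)) : ℝ≥0∞ := ∫⁻ p, ENNReal.ofReal (‖p.1 - p.2‖ ^ 2) ∂ρ

lemma W2_le {μ ν : Measure (Euc d)} (ρ : Measure (Euc d × Euc d)) (h1 : ρ.map Prod.fst = μ)
    (h2 : ρ.map Prod.snd = ν) : W2 μ ν ≤ en ρ ^ (1 / 2 : ℝ) := by
  refine (iInf₂_le ρ ⟨h1, h2⟩).trans (le_of_eq ?_)
  congr 1
  refine lintegral_congr fun p => ?_
  rw [ENNReal.ofReal_pow (norm_nonneg _), ofReal_norm]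
  rfl

lemma cnext_en (hU : StrongAssumption U m L) (hU3 : ThirdDerivBounded U Lt) (hK : 1 ≤ K) {S : ℝ}
    (hS : 0 < S) : ∃ C : ℝ, 0 ≤ C ∧ ∀ s : ℝ, 0 < s → s ≤ S → ∀ (ρ : Measure (Euc d × Euc d))
      [IsProbabilityMeasure ρ], ρ.map Prod.snd = gibbs U →
      en (cnext U (s ^ 2) K ρ)
        ≤ ENNReal.ofReal (1 - m * s ^ 2 + C * s ^ 4) * en ρ + ENNReal.ofReal (C * s ^ 3) := by
  obtain ⟨C1, hC1, hstep⟩ := step_bound (d := d) hU hS K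
  obtain ⟨C2, hC2, hrej⟩ := rej_bound (d := d) hU hU3 hS
  have := noise_prob (d := d) hK
  have := aux_gibbs_prob hU
  set Mg := ∫⁻ z, wt z ∂(_root_.stdGaussian d) with hMg
  set Mp := ∫⁻ z, wt z ∂(gibbs U) with hMp
  have hMg' : Mg ≠ ∞ := (aux_gauss_moment d).ne
  have hMp' : Mp ≠ ∞ := (aux_gibbs_moment hU).ne
  let M : ℝ≥0∞ := Mp + K * Mg + Mp * Mg
  have hM : M ≠ ∞ := by
    simp only [M]
    finiteness
  let D := C1 * S + C1 * C2
  have hD : 0 ≤ D := by positivity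
  refine ⟨C1 + D * M.toReal, by positivity, fun s hs hsS ρ hρp hρ => ?_⟩
  set A := ENNReal.ofReal (1 - m * s ^ 2 + C1 * s ^ 4) with hA
  have hu : ∀ (p : Euc d × Euc d) (r : (Fin K → ℝ) × (Fin K → Euc d) × Euc d),
      (∀ i, |r.1 i| ≤ 1) →
      ∫⁻ u, ENNReal.ofReal (‖prlmcStep U (s ^ 2) K p.1 r.1 r.2.1 r.2.2
          - mala U (s ^ 2) p.2 r.2.2 u‖ ^ 2) ∂unif
        ≤ A * ENNReal.ofReal (‖p.1 - p.2‖ ^ 2)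
          + ENNReal.ofReal (D * s ^ 3) * (wt p.2 + ∑ i, wt (r.2.1 i) + wt p.2 * wt r.2.2) := by
    intro p r hr
    set l := lacc U (s ^ 2) p.2 (eprop U (s ^ 2) p.2 r.2.2) with hl
    set V := ‖eprop U (s ^ 2) p.2 r.2.2 - p.2‖ ^ 2 with hV
    set W := (1 + ‖p.2‖) ^ 5 + ∑ i, (1 + ‖r.2.1 i‖) ^ 5 with hW
    have hW0 : 0 ≤ W := by positivity
    have hWe : ENNReal.ofReal W = wt p.2 + ∑ i, wt (r.2.1 i) := by
      rw [hW, ENNReal.ofReal_add (by positivity) (by positivity),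
        ENNReal.ofReal_sum_of_nonneg (fun i _ => by positivity)]
      rfl
    calc _ ≤ ∫⁻ u, ((A * ENNReal.ofReal (‖p.1 - p.2‖ ^ 2) + ENNReal.ofReal (C1 * s ^ 4 * W))
            + (if u ≤ Real.exp l then 0 else ENNReal.ofReal (C1 / s ^ 2 * V))) ∂unif := by
          refine lintegral_mono fun u => ?_
          refine (ENNReal.ofReal_le_ofReal (hstep s hs hsS p.1 p.2 r.1 r.2.1 r.2.2 u hr)).trans ?_
          refine ENNReal.ofReal_add_le.trans (add_le_add
            (ENNReal.ofReal_add_le.trans (add_le_add ?_ le_rfl)) ?_)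
          · rw [ENNReal.ofReal_mul' (by positivity)]
          · split_ifs with hcond
            · simp
            · exact le_rfl
      _ = (A * ENNReal.ofReal (‖p.1 - p.2‖ ^ 2) + ENNReal.ofReal (C1 * s ^ 4 * W))
            + ∫⁻ u, (if u ≤ Real.exp l then 0 else ENNReal.ofReal (C1 / s ^ 2 * V)) ∂unif := by
          rw [lintegral_add_left measurable_const]; simp
      _ ≤ (A * ENNReal.ofReal (‖p.1 - p.2‖ ^ 2) + ENNReal.ofReal (C1 * s ^ 4 * W))
            + ENNReal.ofReal |l| * ENNReal.ofReal (C1 / s ^ 2 * V) := by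
          gcongr
          exact unif_rej _ _
      _ ≤ (A * ENNReal.ofReal (‖p.1 - p.2‖ ^ 2)
            + ENNReal.ofReal (D * s ^ 3) * (wt p.2 + ∑ i, wt (r.2.1 i)))
            + ENNReal.ofReal (D * s ^ 3) * (wt p.2 * wt r.2.2) := by
          refine add_le_add (add_le_add le_rfl ?_) ?_
          · rw [← hWe, ← ENNReal.ofReal_mul (by positivity)]
            apply ENNReal.ofReal_le_ofReal
            gcongr ?_ * W
            have a1 : C1 * s ^ 4 = C1 * s * s ^ 3 := by ring
            rw [a1]
            gcongr
            have : C1 * s ≤ C1 * S := by gcongr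
            have : 0 ≤ C1 * C2 := by positivity
            simp only [D]; linarith
          · rw [wt, wt, ← ENNReal.ofReal_mul (abs_nonneg _), ← ENNReal.ofReal_mul (by positivity),
              ← ENNReal.ofReal_mul (by positivity)]
            apply ENNReal.ofReal_le_ofReal
            have := hrej s hs hsS p.2 r.2.2
            rw [← hl, ← hV] at this
            set T := (1 + ‖p.2‖) ^ 5 * (1 + ‖r.2.2‖) ^ 5
            have hT : 0 ≤ T := by positivity
            calc |l| * (C1 / s ^ 2 * V) = C1 / s ^ 2 * (|l| * V) := by ring
              _ ≤ C1 / s ^ 2 * (C2 * s ^ 5 * T) := by gcongr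
              _ = C1 * C2 * s ^ 3 * T := by field_simp
              _ ≤ D * s ^ 3 * T := by
                gcongr
                have : 0 ≤ C1 * S := by positivity
                simp only [D]; linarith
      _ = _ := by rw [add_assoc, ← mul_add]
  have hwm : Measurable (wt : Euc d → ℝ≥0∞) := wt_meas
  have hDf : Measurable fun q : (Euc d × Euc d) × ((Fin K → ℝ) × (Fin K → Euc d) × Euc d) × ℝ =>
      ENNReal.ofReal (‖prlmcStep U (s ^ 2) K q.1.1 q.2.1.1 q.2.1.2.1 q.2.1.2.2
        - mala U (s ^ 2) q.1.2 q.2.1.2.2 q.2.2‖ ^ 2) :=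
    (((cmap_fst_meas hU _ K).sub (cmap_snd_meas hU _ K)).norm.pow_const 2).ennreal_ofReal
  have e1 : en (cnext U (s ^ 2) K ρ) = ∫⁻ p, ∫⁻ r, ∫⁻ u,
      ENNReal.ofReal (‖prlmcStep U (s ^ 2) K p.1 r.1 r.2.1 r.2.2
          - mala U (s ^ 2) p.2 r.2.2 u‖ ^ 2) ∂unif ∂(prlmcNoise d K) ∂ρ := by
    rw [en, cnext, lintegral_map (by fun_prop) (cmap_meas hU _ K)]
    change ∫⁻ q : (Euc d × Euc d) × ((Fin K → ℝ) × (Fin K → Euc d) × Euc d) × ℝ,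
      ENNReal.ofReal (‖prlmcStep U (s ^ 2) K q.1.1 q.2.1.1 q.2.1.2.1 q.2.1.2.2
        - mala U (s ^ 2) q.1.2 q.2.1.2.2 q.2.2‖ ^ 2) ∂_ = _
    rw [lintegral_prod _ hDf.aemeasurable]
    refine lintegral_congr fun p => ?_
    exact lintegral_prod _ (hDf.comp measurable_prodMk_left).aemeasurable
  have e2 : ∀ p : Euc d × Euc d, ∫⁻ r, (A * ENNReal.ofReal (‖p.1 - p.2‖ ^ 2)
          + ENNReal.ofReal (D * s ^ 3) * (wt p.2 + ∑ i, wt (r.2.1 i) + wt p.2 * wt r.2.2))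
            ∂(prlmcNoise d K)
      = A * ENNReal.ofReal (‖p.1 - p.2‖ ^ 2)
          + ENNReal.ofReal (D * s ^ 3) * (wt p.2 + K * Mg + wt p.2 * Mg) := by
    intro p
    have hgi : ∀ i : Fin K, Measurable
        fun r : (Fin K → ℝ) × (Fin K → Euc d) × Euc d => wt (r.2.1 i) :=
      fun i => hwm.comp (noise_g hK i).measurable
    have hzz : Measurable
        fun r : (Fin K → ℝ) × (Fin K → Euc d) × Euc d => wt r.2.2 :=
      hwm.comp (noise_z hK).measurable
    have i1 : ∀ i : Fin K, ∫⁻ r, wt (r.2.1 i) ∂(prlmcNoise d K) = Mg := fun i =>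
      (noise_g hK i).lintegral_comp hwm
    have i2 : ∫⁻ r, wt r.2.2 ∂(prlmcNoise d K) = Mg := (noise_z hK).lintegral_comp hwm
    rw [lintegral_add_left measurable_const, lintegral_const, measure_univ, mul_one,
      lintegral_const_mul _ (by fun_prop), lintegral_add_right _ (by fun_prop), lintegral_add_left measurable_const,
      lintegral_finsetSum _ (fun i _ => hgi i), lintegral_const_mul _ hzz, i2]
    simp [i1]
  have hMpρ : ∫⁻ p, wt p.2 ∂ρ = Mp := by
    rw [hMp, ← hρ, lintegral_map hwm measurable_snd]
  calc en (cnext U (s ^ 2) K ρ)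
      ≤ ∫⁻ p, ∫⁻ r, (A * ENNReal.ofReal (‖p.1 - p.2‖ ^ 2)
          + ENNReal.ofReal (D * s ^ 3) * (wt p.2 + ∑ i, wt (r.2.1 i) + wt p.2 * wt r.2.2))
            ∂(prlmcNoise d K) ∂ρ := by
        rw [e1]
        refine lintegral_mono fun p => lintegral_mono_ae ?_
        filter_upwards [noise_ae (d := d) hK] with r hr using hu p r hr
    _ = A * en ρ + ENNReal.ofReal (D * s ^ 3) * M := by
        simp_rw [e2]
        have hw2 : Measurable fun p : Euc d × Euc d => wt p.2 := hwm.comp measurable_snd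
        rw [lintegral_add_left (by fun_prop), lintegral_const_mul _ (by fun_prop),
          lintegral_const_mul _ (by fun_prop), lintegral_add_right _ (by fun_prop),
          lintegral_add_right _ (by fun_prop), lintegral_mul_const _ hw2, hMpρ]
        simp [M, en]
    _ ≤ _ := by
        gcongr ?_ * _ + ?_
        · apply ENNReal.ofReal_le_ofReal
          have : 0 ≤ D * M.toReal := by positivity
          have : 0 ≤ D * M.toReal * s ^ 4 := by positivity
          linarith
        · rw [← ENNReal.ofReal_toReal hM, ← ENNReal.ofReal_mul (by positivity)]
          apply ENNReal.ofReal_le_ofReal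
          rw [ENNReal.toReal_ofReal ENNReal.toReal_nonneg]
          have : 0 ≤ C1 * s ^ 3 := by positivity
          linarith

end Coupling

lemma real_rec {e a b : ℕ → ℝ} {c : ℝ} (hc : 0 < c) (he : ∀ n, 0 ≤ e n) (ha : ∀ n, 0 ≤ a n)
    (hdiv : ¬ Summable a) (hb : Tendsto b atTop (𝓝 0))
    (h : ∀ᶠ n in atTop, c * a n ≤ 1 ∧ e (n + 1) ≤ (1 - c * a n) * e n + a n * b n) :
    Tendsto e atTop (𝓝 0) := by
  rw [Metric.tendsto_atTop]
  intro ε hε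
  have hb' : ∀ᶠ n in atTop, b n ≤ c * (ε / 2) :=
    hb.eventually_le_const (by positivity)
  obtain ⟨N, hN⟩ := eventually_atTop.1 (h.and hb')
  have key : ∀ k, e (N + k) - ε / 2
      ≤ Real.exp (-(c * ∑ i ∈ Finset.range k, a (N + i))) * e N := by
    intro k
    induction k with
    | zero => simp; linarith
    | succ k ih =>
      obtain ⟨⟨h1, h2⟩, h3⟩ := hN (N + k) (by omega)
      rw [Finset.sum_range_succ, mul_add, neg_add, Real.exp_add]
      have h4 : 1 - c * a (N + k) ≤ Real.exp (-(c * a (N + k))) := by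
        linarith [Real.add_one_le_exp (-(c * a (N + k)))]
      set X := Real.exp (-(c * ∑ i ∈ Finset.range k, a (N + i))) with hX
      have hX0 : 0 ≤ X * e N := mul_nonneg (Real.exp_nonneg _) (he N)
      have h5 : e (N + k + 1) - ε / 2 ≤ (1 - c * a (N + k)) * (e (N + k) - ε / 2) := by
        nlinarith [ha (N + k), mul_le_mul_of_nonneg_left h3 (ha (N + k))]
      calc e (N + (k + 1)) - ε / 2 ≤ (1 - c * a (N + k)) * (e (N + k) - ε / 2) := h5
        _ ≤ (1 - c * a (N + k)) * (X * e N) := by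
            apply mul_le_mul_of_nonneg_left ih; linarith
        _ ≤ Real.exp (-(c * a (N + k))) * (X * e N) := by gcongr
        _ = _ := by ring
  have hdiv' : ¬ Summable fun i => a (N + i) := by
    intro hs
    apply hdiv
    rw [← summable_nat_add_iff N]
    simpa [add_comm] using hs
  have ht : Tendsto (fun k => ∑ i ∈ Finset.range k, a (N + i)) atTop atTop :=
    (not_summable_iff_tendsto_nat_atTop_of_nonneg (fun i => ha _)).1 hdiv'
  have ht2 : Tendsto (fun k => Real.exp (-(c * ∑ i ∈ Finset.range k, a (N + i))) * e N)
      atTop (𝓝 0) := by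
    have := (Real.tendsto_exp_neg_atTop_nhds_zero.comp (ht.const_mul_atTop hc)).mul_const (e N)
    simpa using this
  obtain ⟨k0, hk0⟩ := eventually_atTop.1 (ht2.eventually_lt_const (half_pos hε))
  refine ⟨N + k0, fun n hn => ?_⟩
  obtain ⟨k, rfl⟩ : ∃ k, n = N + k := ⟨n - N, by omega⟩
  have := hk0 k (by omega)
  have := key k
  rw [Real.dist_eq, sub_zero, abs_of_nonneg (he _)]
  linarith

/-- The sequence of couplings. -/
def cseq {d : ℕ} (U : Euc d → ℝ) (K : ℕ) (γ : ℕ → ℝ) (x : Euc d) : ℕ → Measure (Euc d × Euc d)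
  | 0 => (Measure.dirac x).prod (gibbs U)
  | n + 1 => cnext U (γ (n + 1)) K (cseq U K γ x n)

/-- Under Assumptions 1 and 3, for a non-increasing positive step sequence
with `γ₁ ≤ 1/(m+L)`, `γ_n → 0` and `∑ γ_n = ∞`, the decreasing-step PRLMC converges to `π`
in 2-Wasserstein distance. -/
theorem stmt6 (d K : ℕ) (hK : 1 ≤ K) (m L Lt : ℝ) (U : Euc d → ℝ)
    (hU : StrongAssumption U m L) (hU3 : ThirdDerivBounded U Lt)
    (γ : ℕ → ℝ) (hpos : ∀ n, 0 < γ n) (hmono : Antitone γ)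
    (hγ1 : γ 1 ≤ 1 / (m + L)) (hlim : Tendsto γ atTop (𝓝 0)) (hdiv : ¬ Summable γ)
    (x : Euc d) :
    Tendsto (fun n : ℕ => W2 (prlmcIterVar U K γ (Measure.dirac x) n) (gibbs U))
      atTop (𝓝 0) := by
  have hm : 0 < m := hU.2.1
  have hL : 0 < L := hm.trans_le hU.2.2.1
  have := aux_gibbs_prob hU
  have hprob : ∀ n, IsProbabilityMeasure (cseq U K γ x n) := by
    intro n
    induction n with
    | zero => rw [cseq]; infer_instance
    | succ n ih => exact cnext_prob hU hK _ _
  have hsnd : ∀ n, (cseq U K γ x n).map Prod.snd = gibbs U := by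
    intro n
    induction n with
    | zero => rw [cseq]; simp
    | succ n ih => exact cnext_snd hU hK (hpos _) _ ih
  have hfst : ∀ n, (cseq U K γ x n).map Prod.fst = prlmcIterVar U K γ (Measure.dirac x) n := by
    intro n
    induction n with
    | zero => rw [cseq, prlmcIterVar]; simp
    | succ n ih => rw [cseq, prlmcIterVar, cnext_fst hU hK, ih]
  let s : ℕ → ℝ := fun n => Real.sqrt (γ (n + 1))
  have hs0 : ∀ n, 0 < s n := fun n => Real.sqrt_pos.2 (hpos _)
  have hs2 : ∀ n, s n ^ 2 = γ (n + 1) := fun n => Real.sq_sqrt (hpos _).le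
  have hsS : ∀ n, s n ≤ s 0 := fun n => Real.sqrt_le_sqrt (hmono (by omega))
  obtain ⟨C, hC, hrec⟩ := cnext_en (d := d) hU hU3 hK (hs0 0)
  have hstep : ∀ n, en (cseq U K γ x (n + 1))
      ≤ ENNReal.ofReal (1 - m * s n ^ 2 + C * s n ^ 4) * en (cseq U K γ x n)
        + ENNReal.ofReal (C * s n ^ 3) := by
    intro n
    have := hrec (s n) (hs0 n) (hsS n) (cseq U K γ x n) (hsnd n)
    rw [hs2] at this
    rw [cseq, hs2]
    exact this
  have hfin : ∀ n, en (cseq U K γ x n) ≠ ∞ := by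
    intro n
    induction n with
    | zero =>
      rw [en, cseq, lintegral_prod _ (by fun_prop), lintegral_dirac]
      have hb : ∀ y : Euc d, ENNReal.ofReal (‖x - y‖ ^ 2)
          ≤ ENNReal.ofReal (2 * (1 + ‖x‖ ^ 2)) * wt y := by
        intro y
        rw [wt, ← ENNReal.ofReal_mul (by positivity)]
        apply ENNReal.ofReal_le_ofReal
        have h0 := norm_nonneg y
        have h1 : (1 + ‖y‖) ^ 2 ≤ (1 + ‖y‖) ^ 5 := pow_le_pow_right₀ (by linarith) (by norm_num)
        have h2 : ‖x - y‖ ^ 2 ≤ 2 * (‖x‖ ^ 2 + ‖y‖ ^ 2) := by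
          calc ‖x - y‖ ^ 2 ≤ (‖x‖ + ‖y‖) ^ 2 := by gcongr; exact norm_sub_le _ _
            _ ≤ _ := add_sq_le
        calc ‖x - y‖ ^ 2 ≤ 2 * (1 + ‖x‖ ^ 2) * (1 + ‖y‖) ^ 2 := by
              nlinarith [sq_nonneg ‖x‖, sq_nonneg ‖y‖, mul_nonneg (sq_nonneg ‖x‖) h0,
                mul_nonneg (sq_nonneg ‖x‖) (sq_nonneg ‖y‖)]
          _ ≤ _ := by gcongr
      refine ne_top_of_le_ne_top ?_ (lintegral_mono hb)
      rw [lintegral_const_mul _ wt_meas]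
      exact ENNReal.mul_ne_top ENNReal.ofReal_ne_top (aux_gibbs_moment hU).ne
    | succ n ih =>
      refine ne_top_of_le_ne_top ?_ (hstep n)
      exact ENNReal.add_ne_top.2 ⟨ENNReal.mul_ne_top ENNReal.ofReal_ne_top ih, ENNReal.ofReal_ne_top⟩
  have hγ' : Tendsto (fun n => γ (n + 1)) atTop (𝓝 0) := (tendsto_add_atTop_iff_nat 1).2 hlim
  have hs' : Tendsto s atTop (𝓝 0) := by
    have := (Real.continuous_sqrt.tendsto 0).comp hγ'
    rwa [Real.sqrt_zero] at this
  have hreal : Tendsto (fun n => (en (cseq U K γ x n)).toReal) atTop (𝓝 0) := by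
    refine real_rec (a := fun n => γ (n + 1)) (b := fun n => C * s n) (half_pos hm)
      (fun n => ENNReal.toReal_nonneg) (fun n => (hpos _).le) ?_ ?_ ?_
    · rwa [summable_nat_add_iff 1]
    · simpa using hs'.const_mul C
    · have t1 : ∀ᶠ n in atTop, γ (n + 1) ≤ 1 / m := hγ'.eventually_le_const (by positivity)
      have t2 : ∀ᶠ n in atTop, C * γ (n + 1) ≤ m / 2 := by
        have := hγ'.const_mul C
        rw [mul_zero] at this
        exact this.eventually_le_const (by positivity)
      filter_upwards [t1, t2] with n h1 h2
      have hg := hpos (n + 1)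
      have h1' : m * γ (n + 1) ≤ 1 := by
        rw [le_div_iff₀ hm] at h1; linarith
      refine ⟨by linarith [mul_pos hm hg], ?_⟩
      have hk : 0 ≤ 1 - m * s n ^ 2 + C * s n ^ 4 := by
        rw [hs2]
        have : 0 ≤ C * s n ^ 4 := by positivity
        linarith
      have h3 := ENNReal.toReal_mono (ENNReal.add_ne_top.2 ⟨ENNReal.mul_ne_top
        ENNReal.ofReal_ne_top (hfin n), ENNReal.ofReal_ne_top⟩) (hstep n)
      have hs3 : 0 ≤ C * s n ^ 3 := mul_nonneg hC (pow_nonneg (hs0 n).le 3)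
      rw [ENNReal.toReal_add (ENNReal.mul_ne_top ENNReal.ofReal_ne_top (hfin n))
        ENNReal.ofReal_ne_top, ENNReal.toReal_mul, ENNReal.toReal_ofReal hk,
        ENNReal.toReal_ofReal hs3] at h3
      refine h3.trans (add_le_add (mul_le_mul_of_nonneg_right ?_ ENNReal.toReal_nonneg)
        (le_of_eq ?_))
      · have : C * s n ^ 4 = (C * γ (n + 1)) * γ (n + 1) := by rw [← hs2]; ring
        rw [hs2, this]
        nlinarith
      · rw [← hs2]; ring
  have hE : Tendsto (fun n => en (cseq U K γ x n)) atTop (𝓝 0) := by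
    have := ENNReal.tendsto_ofReal hreal
    rw [ENNReal.ofReal_zero] at this
    refine this.congr fun n => ENNReal.ofReal_toReal (hfin n)
  have hE2 : Tendsto (fun n => en (cseq U K γ x n) ^ (1 / 2 : ℝ)) atTop (𝓝 0) := by
    have := hE.ennrpow_const (1 / 2 : ℝ)
    rwa [ENNReal.zero_rpow_of_pos (by norm_num)] at this
  exact tendsto_of_tendsto_of_tendsto_of_le_of_le tendsto_const_nhds hE2 (fun n => zero_le)
    (fun n => W2_le _ (hfst n) (hsnd n))

end
end

section
/- Let (γ_n)_{n≥1} be a non-increasing positive sequence with ω := limsup_{n→∞} (γ_n − γ_{n+1})/γ_{n+1}² < ∞, and let m > 2ω. Define t_n = Σ_{k=1}^n γ_k, u_0 = 0 and u_n = Σ_{k=1}^n γ_k² e^{−(m/2)(t_n − t_k)} for n ≥ 1. Then (i) limsup_{n→∞} u_n / γ_n < ∞, and (ii) lim_{n→∞} e^{−m t_n} / γ_n = 0. -/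
open MeasureTheory ProbabilityTheory Filter
open scoped ENNReal NNReal RealInnerProductSpace Topology BigOperators

noncomputable section

/-- For a non-increasing positive step sequence with
`ω = limsup (γ_n − γ_{n+1})/γ_{n+1}² < ∞` and `m > 2ω`:
(i) `limsup u_n/γ_n < ∞` where `u_n = ∑_{k=1}^n γ_k² e^{−(m/2)(t_n − t_k)}`, and
(ii) `e^{−m t_n}/γ_n → 0`. -/
theorem stmt16 (γ : ℕ → ℝ) (m : ℝ) (hm : 0 < m)
    (hpos : ∀ n, 0 < γ n) (hmono : Antitone γ)
    (hlim : Tendsto γ atTop (𝓝 0)) (hdiv : ¬ Summable γ)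
    (w : ℝ) (hw : ∀ᶠ n in atTop, (γ n - γ (n + 1)) / (γ (n + 1)) ^ 2 ≤ w)
    (hwm : 2 * w < m) :
    (∃ M : ℝ, ∀ᶠ n in atTop,
      (∑ k ∈ Finset.Icc 1 n, (γ k) ^ 2 * Real.exp (-(m / 2) * (tseq γ n - tseq γ k))) / γ n
        ≤ M) ∧
    Tendsto (fun n : ℕ => Real.exp (-m * tseq γ n) / γ n) atTop (𝓝 0) := by
  -- recursion for the cumulative times
  have ht : ∀ n, tseq γ (n + 1) = tseq γ n + γ (n + 1) := by
    intro n
    unfold tseq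
    rw [Finset.sum_Icc_succ_top (by omega)]
  obtain ⟨N, hN⟩ := eventually_atTop.1 hw
  -- ratio bound
  have hr : ∀ n, N ≤ n → γ n ≤ γ (n + 1) * Real.exp (w * γ (n + 1)) := by
    intro n hn
    have h1 := hN n hn
    have hg := hpos (n + 1)
    rw [div_le_iff₀ (by positivity)] at h1
    have h2 := Real.add_one_le_exp (w * γ (n + 1))
    nlinarith [mul_le_mul_of_nonneg_left h2 hg.le]
  constructor
  · obtain ⟨δ, hδ⟩ : ∃ δ, δ = m / 2 - w := ⟨_, rfl⟩
    have hδ0 : 0 < δ := by linarith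
    set u : ℕ → ℝ := fun n => ∑ k ∈ Finset.Icc 1 n,
      (γ k) ^ 2 * Real.exp (-(m / 2) * (tseq γ n - tseq γ k)) with hu
    have hu0 : ∀ n, 0 ≤ u n := fun n => Finset.sum_nonneg fun k _ => by positivity
    have hrec : ∀ n, u (n + 1) = Real.exp (-(m / 2) * γ (n + 1)) * u n + γ (n + 1) ^ 2 := by
      intro n
      simp only [hu]
      rw [Finset.sum_Icc_succ_top (by omega), Finset.mul_sum]
      congr 1
      · refine Finset.sum_congr rfl fun k _ => ?_
        rw [ht, show -(m / 2) * (tseq γ n + γ (n + 1) - tseq γ k)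
          = -(m / 2) * γ (n + 1) + -(m / 2) * (tseq γ n - tseq γ k) by ring, Real.exp_add]
        ring
      · simp
    set M := max (u N / γ N) ((1 + δ * γ 0) / δ) with hM
    have hMδ : 1 + δ * γ 0 ≤ M * δ := (div_le_iff₀ hδ0).1 (le_max_right _ _)
    have hM0 : 0 ≤ M := (div_nonneg (hu0 N) (hpos N).le).trans (le_max_left _ _)
    have key : ∀ n, N ≤ n → u n ≤ M * γ n := by
      intro n hn
      induction n, hn using Nat.le_induction with
      | base => exact (div_le_iff₀ (hpos N)).1 (le_max_left _ _)
      | succ n hn ih =>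
        rw [hrec]
        have hg := hpos (n + 1)
        have hg0 : γ (n + 1) ≤ γ 0 := hmono (Nat.zero_le _)
        have h1 : Real.exp (-(m / 2) * γ (n + 1)) * u n
            ≤ M * γ (n + 1) * Real.exp (-(δ * γ (n + 1))) := by
          calc Real.exp (-(m / 2) * γ (n + 1)) * u n
              ≤ Real.exp (-(m / 2) * γ (n + 1)) *
                (M * (γ (n + 1) * Real.exp (w * γ (n + 1)))) := by
                have := mul_le_mul_of_nonneg_left (hr n hn) hM0
                exact mul_le_mul_of_nonneg_left (ih.trans this) (Real.exp_pos _).le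
            _ = M * γ (n + 1) * (Real.exp (-(m / 2) * γ (n + 1)) * Real.exp (w * γ (n + 1))) := by
                ring
            _ = _ := by
                rw [← Real.exp_add, hδ]
                ring_nf
        have h2 : Real.exp (-(δ * γ (n + 1))) ≤ 1 / (1 + δ * γ (n + 1)) := by
          rw [Real.exp_neg, inv_eq_one_div]
          refine one_div_le_one_div_of_le (by positivity) ?_
          linarith [Real.add_one_le_exp (δ * γ (n + 1))]
        have h3 : M * (1 / (1 + δ * γ (n + 1))) + γ (n + 1) ≤ M := by
          have hp : 0 < 1 + δ * γ (n + 1) := by positivity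
          rw [mul_one_div, ← le_sub_iff_add_le, div_le_iff₀ hp]
          have : 1 + δ * γ (n + 1) ≤ M * δ :=
            le_trans (by nlinarith [mul_le_mul_of_nonneg_left hg0 hδ0.le]) hMδ
          nlinarith [mul_le_mul_of_nonneg_left this hg.le]
        have h4 := mul_le_mul_of_nonneg_left h2 (mul_nonneg hM0 hg.le)
        nlinarith [mul_le_mul_of_nonneg_left h3 hg.le]
    refine ⟨M, eventually_atTop.2 ⟨N, fun n hn => ?_⟩⟩
    exact (div_le_iff₀ (hpos n)).2 (key n hn)
  · have hT : Tendsto (tseq γ) atTop atTop := by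
      have h1 := (not_summable_iff_tendsto_nat_atTop_of_nonneg fun n => (hpos n).le).1 hdiv
      have h2 : ∀ n, tseq γ n = (∑ i ∈ Finset.range (n + 1), γ i) + (-γ 0) := by
        intro n
        induction n with
        | zero => simp [tseq]
        | succ n ih => rw [ht, ih, Finset.sum_range_succ _ (n + 1)]; ring
      rw [funext h2]
      exact tendsto_atTop_add_const_right _ _ ((tendsto_add_atTop_iff_nat 1).2 h1)
    have hb : ∀ n, N ≤ n →
        Real.exp (-w * tseq γ n) / γ n ≤ Real.exp (-w * tseq γ N) / γ N := by
      intro n hn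
      induction n, hn using Nat.le_induction with
      | base => exact le_rfl
      | succ n hn ih =>
        refine le_trans ?_ ih
        rw [div_le_div_iff₀ (hpos _) (hpos _), ht]
        calc Real.exp (-w * (tseq γ n + γ (n + 1))) * γ n
            ≤ Real.exp (-w * (tseq γ n + γ (n + 1))) *
              (γ (n + 1) * Real.exp (w * γ (n + 1))) :=
              mul_le_mul_of_nonneg_left (hr n hn) (Real.exp_pos _).le
          _ = Real.exp (-w * (tseq γ n + γ (n + 1))) * Real.exp (w * γ (n + 1)) * γ (n + 1) := by
              ring
          _ = _ := by
              rw [← Real.exp_add]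
              ring_nf
    have hz : Tendsto (fun n => Real.exp (-w * tseq γ N) / γ N *
        Real.exp (-((m - w) * tseq γ n))) atTop (𝓝 0) := by
      have h1 : Tendsto (fun n => (m - w) * tseq γ n) atTop atTop :=
        hT.const_mul_atTop (by linarith)
      simpa using (Real.tendsto_exp_neg_atTop_nhds_zero.comp h1).const_mul
        (Real.exp (-w * tseq γ N) / γ N)
    refine squeeze_zero' (Eventually.of_forall fun n => ?_)
      (eventually_atTop.2 ⟨N, fun n hn => ?_⟩) hz
    · exact div_nonneg (Real.exp_pos _).le (hpos n).le
    · calc Real.exp (-m * tseq γ n) / γ n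
          = Real.exp (-w * tseq γ n) / γ n * Real.exp (-((m - w) * tseq γ n)) := by
            rw [div_mul_eq_mul_div, ← Real.exp_add]
            ring_nf
        _ ≤ _ := mul_le_mul_of_nonneg_right (hb n hn) (Real.exp_pos _).le

end
end
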